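/- arXiv:2310.18960 — 3 statements merged into one kernel-verified Lean document; each statement's English description precedes it below -/
import Mathlib

section
/- Let P = x + [0,a] + [0,b] ⊂ ℝ² be a parallelogram, where a, b ∈ ℝ² are linearly independent, let z ∈ ℝ² be nonzero, and let t⁻ = min{z·y : y ∈ P}, t⁺ = max{z·y : y ∈ P}. Then (1/(t⁺−t⁻)) · ∫_{t⁻}^{t⁺} ( (number of vertices of P ∩ {y : z·y ≤ t}) + (number of vertices of P ∩ {y : z·y ≥ t}) )/2 dt = 4, i.e., a parallelogram is a critical polygon: the expected number of vertices of the two pieces of a uniform random cut orthogonal to any direction equals its number of vertices. -/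
open scoped Pointwise BigOperators

noncomputable section

/-- Scalar product on `ℝ^d`. -/
def dotp {d : ℕ} (z x : Fin d → ℝ) : ℝ := ∑ i, z i * x i

/-- Number of vertices (extreme points) of a set. -/
def nVert {d : ℕ} (S : Set (Fin d → ℝ)) : ℕ := (Set.extremePoints ℝ S).ncard

/-- `t⁻ = min {z·x : x ∈ P}`. -/
def tMin {d : ℕ} (P : Set (Fin d → ℝ)) (z : Fin d → ℝ) : ℝ := sInf (dotp z '' P)

/-- `t⁺ = max {z·x : x ∈ P}`. -/
def tMax {d : ℕ} (P : Set (Fin d → ℝ)) (z : Fin d → ℝ) : ℝ := sSup (dotp z '' P)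

/-- `A(P,z)`: the average number of vertices of the sections `P ∩ {x : z·x = t}`
over `t ∈ [t⁻, t⁺]`. -/
def avgVert {d : ℕ} (P : Set (Fin d → ℝ)) (z : Fin d → ℝ) : ℝ :=
  (tMax P z - tMin P z)⁻¹ *
    ∫ t in tMin P z..tMax P z, ((nVert (P ∩ {x | dotp z x = t}) : ℝ))

/-- A convex polytope: the convex hull of a finite point set. -/
def IsPolytope {d : ℕ} (P : Set (Fin d → ℝ)) : Prop :=
  ∃ s : Finset (Fin d → ℝ), P = convexHull ℝ (s : Set (Fin d → ℝ))

/-- The vectors are nonzero and pairwise linearly independent. -/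
def PairwiseIndep {d n : ℕ} (a : Fin n → (Fin d → ℝ)) : Prop :=
  (∀ i, a i ≠ 0) ∧ ∀ i j, i ≠ j → ∀ c : ℝ, a j ≠ c • a i

/-- A zonotope: a translate of a Minkowski sum of segments `[0, aᵢ]` with pairwise
linearly independent nonzero generators. -/
def IsZonotope {d : ℕ} (P : Set (Fin d → ℝ)) : Prop :=
  ∃ (n : ℕ) (a : Fin n → (Fin d → ℝ)) (x : Fin d → ℝ),
    PairwiseIndep a ∧ P = {x} + ∑ i, segment ℝ 0 (a i)

/-- Central symmetry: there is `c` with `2c - P = P`. -/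
def CentSymm {d : ℕ} (P : Set (Fin d → ℝ)) : Prop :=
  ∃ c : Fin d → ℝ, (fun y => (2 : ℝ) • c - y) '' P = P

/-- An edge of the hypergraph `ℱ` on the generator set `V`: a subset `W ⊆ V` spanning
a 2-dimensional subspace, maximal with this property. -/
def IsHEdge (V W : Finset (Fin 3 → ℝ)) : Prop :=
  W ⊆ V ∧ Module.finrank ℝ (Submodule.span ℝ (W : Set (Fin 3 → ℝ))) = 2 ∧
    ∀ v ∈ V, v ∉ W →
      Module.finrank ℝ (Submodule.span ℝ (insert v (W : Set (Fin 3 → ℝ)))) = 3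

/-- The degree of `v` in the hypergraph `ℱ` on `V`: the number of edges containing `v`. -/
def degF (V : Finset (Fin 3 → ℝ)) (v : Fin 3 → ℝ) : ℕ :=
  {W : Finset (Fin 3 → ℝ) | IsHEdge V W ∧ v ∈ W}.ncard

/-- The set of edges of the polytope `P` that are parallel to `v`: one-dimensional
exposed faces `[u,w]` of `P` with `w - u` a nonzero multiple of `v`. -/
def edgesParallel {d : ℕ} (P : Set (Fin d → ℝ)) (v : Fin d → ℝ) : Set (Set (Fin d → ℝ)) :=
  {e | ∃ u w : Fin d → ℝ, u ≠ w ∧ e = segment ℝ u w ∧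
    (∃ y : Fin d → ℝ, y ≠ 0 ∧ e = {x ∈ P | ∀ p ∈ P, dotp y p ≤ dotp y x}) ∧
    ∃ c : ℝ, c ≠ 0 ∧ w - u = c • v}

/-!
A hyperplane that misses the vertices of a polytope distributes these vertices among the two
pieces, and every vertex of the section becomes a new vertex of both pieces. The section of a
polygon by a line through its interior is a segment, so the two pieces together have four vertices
more than the polygon. Only the finitely many levels through vertices are exceptional, hence a
polygon with `n` vertices has average `(n + 4) / 2` in every direction, and this is `n` exactly
when `n = 4`.
-/

section ExtremePoints

lemma extremePoints_image_affineMap {𝕜 E F : Type*} [Ring 𝕜] [PartialOrder 𝕜]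
    [AddRightMono 𝕜] [AddCommGroup E] [Module 𝕜 E] [AddCommGroup F] [Module 𝕜 F]
    (g : E →ᵃ[𝕜] F) (hg : Function.Injective g) (A : Set E) :
    (g '' A).extremePoints 𝕜 = g '' A.extremePoints 𝕜 := by
  ext y
  constructor
  · rintro ⟨⟨p, hp, rfl⟩, hext⟩
    refine ⟨p, ⟨hp, fun u hu v hv hpuv ↦ ?_⟩, rfl⟩
    refine hg (hext (Set.mem_image_of_mem g hu) (Set.mem_image_of_mem g hv) ?_)
    exact image_openSegment 𝕜 g u v ▸ Set.mem_image_of_mem g hpuv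
  · rintro ⟨p, ⟨hp, hext⟩, rfl⟩
    refine ⟨Set.mem_image_of_mem g hp, ?_⟩
    rintro _ ⟨u, hu, rfl⟩ _ ⟨v, hv, rfl⟩ hpuv
    rw [← image_openSegment, hg.mem_set_image] at hpuv
    rw [hext hu hv hpuv]

variable {E : Type*} [AddCommGroup E] [Module ℝ E] [TopologicalSpace E]

lemma mem_extremePoints_of_inter_mem_nhds [ContinuousAdd E] [ContinuousSMul ℝ E]
    {A U : Set E} {p : E} (hA : Convex ℝ A)
    (hU : U ∈ nhds p) (hp : p ∈ (A ∩ U).extremePoints ℝ) : p ∈ A.extremePoints ℝ := by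
  refine ⟨hp.1.1, fun u hu v hv hpuv ↦ ?_⟩
  -- A homothety centred at `p` with a small ratio moves `u` and `v` into `U`.
  have eventually_mem (w : E) : ∀ᶠ ε : ℝ in nhdsWithin 0 (Set.Ioi 0),
      AffineMap.lineMap p w ε ∈ U := by
    refine nhdsWithin_le_nhds (ContinuousAt.eventually_mem ?_ ?_)
    · simp only [AffineMap.coe_lineMap, vsub_eq_sub, vadd_eq_add]
      fun_prop
    · simpa only [AffineMap.lineMap_apply_zero] using hU
  obtain ⟨ε, ⟨⟨huU, hvU⟩, hε₁⟩, hε₀⟩ := ((eventually_mem u).and (eventually_mem v)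
    |>.and (nhdsWithin_le_nhds (eventually_le_nhds zero_lt_one))
    |>.and self_mem_nhdsWithin).exists
  have mem_A {w : E} (hw : w ∈ A) : AffineMap.lineMap p w ε ∈ A :=
    hA.lineMap_mem hp.1.1 hw ⟨hε₀.le, hε₁⟩
  have hp_shrunk : p ∈ openSegment ℝ (AffineMap.lineMap p u ε) (AffineMap.lineMap p v ε) := by
    simp only [← AffineMap.homothety_eq_lineMap, ← image_openSegment]
    exact ⟨p, hpuv, AffineMap.homothety_apply_same p ε⟩
  have hfix := hp.2 ⟨mem_A hu, huU⟩ ⟨mem_A hv, hvU⟩ hp_shrunk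
  exact ((AffineMap.lineMap_eq_left_iff.1 hfix).resolve_right hε₀.ne').symm

lemma isExtreme_inter_fiber (A : Set E) (f : StrongDual ℝ E) (t : ℝ) :
    IsExtreme ℝ (A ∩ {y | f y ≤ t}) (A ∩ {y | f y = t}) := by
  refine IsExposed.isExtreme fun ⟨q, hqA, hqt⟩ ↦ ⟨f, ?_⟩
  ext y
  constructor
  · rintro ⟨hyA, hyt⟩
    exact ⟨⟨hyA, hyt.le⟩, fun w hw ↦ hw.2.trans hyt.ge⟩
  · rintro ⟨⟨hyA, hyt⟩, hmax⟩
    exact ⟨hyA, hyt.antisymm (hqt.ge.trans (hmax q ⟨hqA, hqt.le⟩))⟩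

variable [ContinuousAdd E] [ContinuousSMul ℝ E] {A : Set E}

lemma extremePoints_inter_halfSpace_le (hA : Convex ℝ A) (f : StrongDual ℝ E) (t : ℝ) :
    (A ∩ {y | f y ≤ t}).extremePoints ℝ =
      (A.extremePoints ℝ ∩ {y | f y < t}) ∪ (A ∩ {y | f y = t}).extremePoints ℝ := by
  rw [(isExtreme_inter_fiber A f t).extremePoints_eq]
  ext p
  constructor
  · intro hp
    rcases lt_or_eq_of_le (show f p ≤ t from hp.1.2) with hlt | heq
    · have hnhds : {y | f y ≤ t} ∈ nhds p :=
        f.continuous.continuousAt.eventually (eventually_le_nhds hlt)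
      exact .inl ⟨mem_extremePoints_of_inter_mem_nhds hA hnhds hp, hlt⟩
    · exact .inr ⟨⟨hp.1.1, heq⟩, hp⟩
  · rintro (⟨hpA, hlt⟩ | ⟨-, hp⟩)
    · exact inter_extremePoints_subset_extremePoints_of_subset Set.inter_subset_left
        ⟨⟨hpA.1, (show f p < t from hlt).le⟩, hpA⟩
    · exact hp

lemma extremePoints_inter_halfSpace_ge (hA : Convex ℝ A) (f : StrongDual ℝ E) (t : ℝ) :
    (A ∩ {y | t ≤ f y}).extremePoints ℝ =
      (A.extremePoints ℝ ∩ {y | t < f y}) ∪ (A ∩ {y | f y = t}).extremePoints ℝ := by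
  have := extremePoints_inter_halfSpace_le hA (-f) (-t)
  simpa only [neg_apply, neg_le_neg_iff, neg_lt_neg_iff, neg_inj] using this

lemma ncard_extremePoints_halfSpaces_add (hA : Convex ℝ A) (hfin : (A.extremePoints ℝ).Finite)
    (f : StrongDual ℝ E) {t : ℝ} (ht : t ∉ f '' A.extremePoints ℝ)
    (hsec : ((A ∩ {y | f y = t}).extremePoints ℝ).Finite) :
    ((A ∩ {y | f y ≤ t}).extremePoints ℝ).ncard + ((A ∩ {y | t ≤ f y}).extremePoints ℝ).ncard =
      (A.extremePoints ℝ).ncard + 2 * ((A ∩ {y | f y = t}).extremePoints ℝ).ncard := by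
  have disjoint_section {s : Set E} (hs : ∀ y ∈ s, f y ≠ t) :
      Disjoint (A.extremePoints ℝ ∩ s) ((A ∩ {y | f y = t}).extremePoints ℝ) :=
    Set.disjoint_left.2 fun y hy hy' ↦ hs y hy.2 (extremePoints_subset hy').2
  have hdiff : A.extremePoints ℝ \ {y | f y < t} = A.extremePoints ℝ ∩ {y | t < f y} := by
    ext y
    refine and_congr_right fun hy ↦ ?_
    have hne : t ≠ f y := fun h ↦ ht ⟨y, hy, h.symm⟩
    exact not_lt.trans hne.le_iff_lt
  rw [extremePoints_inter_halfSpace_le hA, extremePoints_inter_halfSpace_ge hA,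
    Set.ncard_union_eq (disjoint_section fun y hy ↦ hy.ne) (hfin.inter_of_left _) hsec,
    Set.ncard_union_eq (disjoint_section fun y hy ↦ hy.ne') (hfin.inter_of_left _) hsec,
    ← Set.ncard_inter_add_ncard_sdiff_eq_ncard _ {y | f y < t} hfin, hdiff]
  ring

end ExtremePoints

section Sections

lemma ncard_extremePoints_real {K : Set ℝ} (hconv : Convex ℝ K) (hcomp : IsCompact K)
    (hint : (interior K).Nonempty) : (K.extremePoints ℝ).ncard = 2 := by
  have hK : K = Set.Icc (sInf K) (sSup K) := eq_Icc_of_connected_compact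
    ⟨hint.mono interior_subset, hconv.isPreconnected⟩ hcomp
  have hlt : sInf K < sSup K := by
    rwa [hK, interior_Icc, Set.nonempty_Ioo] at hint
  rw [hK, Set.extremePoints_Icc hlt.le, Set.ncard_pair hlt.ne]

lemma ncard_extremePoints_inter_line {E : Type*} [NormedAddCommGroup E] [NormedSpace ℝ E]
    {A : Set E} (hconv : Convex ℝ A) (hcomp : IsCompact A) {p q : E} (hp : p ∈ interior A)
    (hpq : p ≠ q) : ((A ∩ line[ℝ, p, q]).extremePoints ℝ).ncard = 2 := by
  have hcont : Continuous (AffineMap.lineMap p q : ℝ → E) := AffineMap.lineMap_continuous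
  have hclosed : Topology.IsClosedEmbedding (AffineMap.lineMap p q : ℝ → E) :=
    (antilipschitzWith_lineMap hpq).isClosedEmbedding (lipschitzWith_lineMap p q).uniformContinuous
  have hsec : A ∩ line[ℝ, p, q] =
      (AffineMap.lineMap p q : ℝ →ᵃ[ℝ] E) '' (AffineMap.lineMap p q ⁻¹' A) := by
    rw [Set.image_preimage_eq_inter_range]
    exact congrArg (A ∩ ·) (Set.ext fun _ ↦ mem_affineSpan_pair_iff_exists_lineMap_eq)
  rw [hsec, extremePoints_image_affineMap _ hclosed.injective,
    Set.ncard_image_of_injective _ hclosed.injective]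
  refine ncard_extremePoints_real (hconv.affine_preimage _) (hclosed.isCompact_preimage hcomp)
    ⟨0, preimage_interior_subset_interior_preimage hcont ?_⟩
  simpa only [Set.mem_preimage, AffineMap.lineMap_apply_zero] using hp

lemma exists_fiber_eq_line {K V : Type*} [Field K] [AddCommGroup V] [Module K V]
    (hV : Module.finrank K V = 2) {f : Module.Dual K V} (hf : f ≠ 0) (p : V) :
    ∃ q, p ≠ q ∧ {y | f y = f p} = (line[K, p, q] : Set V) := by
  have : FiniteDimensional K V := .of_finrank_pos (by omega)
  have hker : Module.finrank K (LinearMap.ker f) = 1 := by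
    have := Module.Dual.finrank_ker_add_one_of_ne_zero hf
    omega
  obtain ⟨v, hv, hspan⟩ := finrank_eq_one_iff'.1 hker
  refine ⟨v + p, ?_, ?_⟩
  · simpa using hv
  · ext y
    rw [SetLike.mem_coe, ← vsub_vadd y p, vadd_left_mem_affineSpan_pair]
    simp only [vsub_eq_sub, vadd_eq_add, sub_add_cancel, add_sub_cancel_right, Set.mem_ofPred_eq]
    constructor
    · intro hy
      obtain ⟨c, hc⟩ := hspan ⟨y - p, LinearMap.sub_mem_ker_iff.2 hy⟩
      exact ⟨c, congrArg Subtype.val hc⟩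
    · rintro ⟨c, hc⟩
      exact LinearMap.sub_mem_ker_iff.1 (hc ▸ Submodule.smul_mem _ c v.2)

lemma exists_mem_interior_apply_eq {E : Type*} [AddCommGroup E] [Module ℝ E] [TopologicalSpace E]
    [IsTopologicalAddGroup E] [ContinuousSMul ℝ E] {A : Set E} (hA : Convex ℝ A)
    (hint : (interior A).Nonempty) (f : StrongDual ℝ E) {u v : E} (hu : u ∈ A) (hv : v ∈ A)
    {t : ℝ} (hut : f u < t) (htv : t < f v) : ∃ p ∈ interior A, f p = t := by
  have subset_closure_interior : A ⊆ closure (interior A) :=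
    hA.closure_interior_eq_closure_of_nonempty_interior hint ▸ subset_closure
  obtain ⟨u', hu't, hu'⟩ := mem_closure_iff.1 (subset_closure_interior hu) {y | f y < t}
    (isOpen_lt f.continuous continuous_const) hut
  obtain ⟨v', hv't, hv'⟩ := mem_closure_iff.1 (subset_closure_interior hv) {y | t < f y}
    (isOpen_lt continuous_const f.continuous) htv
  exact hA.interior.isPreconnected.intermediate_value hu' hv' f.continuous.continuousOn
    ⟨hu't.le, hv't.le⟩

lemma ncard_extremePoints_inter_fiber {E : Type*} [NormedAddCommGroup E] [NormedSpace ℝ E]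
    (hE : Module.finrank ℝ E = 2) {A : Set E} (hconv : Convex ℝ A) (hcomp : IsCompact A)
    (hint : (interior A).Nonempty) (f : StrongDual ℝ E) {u v : E} (hu : u ∈ A) (hv : v ∈ A)
    {t : ℝ} (hut : f u < t) (htv : t < f v) :
    ((A ∩ {y | f y = t}).extremePoints ℝ).ncard = 2 := by
  obtain ⟨p, hp, rfl⟩ := exists_mem_interior_apply_eq hconv hint f hu hv hut htv
  have hf : f.toLinearMap ≠ 0 := by
    intro h
    have happ (y : E) : f y = 0 := LinearMap.congr_fun h y
    simp only [happ, lt_irrefl] at hut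
  obtain ⟨q, hpq, hfiber⟩ := exists_fiber_eq_line hE hf p
  have hline : {y | f y = f p} = (line[ℝ, p, q] : Set E) := hfiber
  rw [hline]
  exact ncard_extremePoints_inter_line hconv hcomp hp hpq

end Sections

lemma inv_mul_intervalIntegral_eq_of_eq_on_Ioo_diff {g : ℝ → ℝ} {a b c : ℝ} (hab : a < b)
    {s : Set ℝ} (hs : s.Countable) (hg : ∀ t ∈ Set.Ioo a b, t ∉ s → g t = c) :
    (b - a)⁻¹ * ∫ t in a..b, g t = c := by
  have hae : ∀ᵐ t ∂MeasureTheory.volume, t ∈ Set.uIoc a b → g t = c := by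
    filter_upwards [(hs.insert b).ae_notMem MeasureTheory.volume] with t ht htab
    rw [Set.uIoc_of_le hab.le] at htab
    rw [Set.mem_insert_iff, not_or] at ht
    exact hg t ⟨htab.1, htab.2.lt_of_ne ht.1⟩ ht.2
  rw [intervalIntegral.integral_congr_ae hae, intervalIntegral.integral_const, smul_eq_mul,
    inv_mul_cancel_left₀ (sub_pos.2 hab).ne']

section Polytopes

variable {d : ℕ}

/-- The functional `dotp z`, bundled as a continuous linear map. -/
def dotpCLM (z : Fin d → ℝ) : StrongDual ℝ (Fin d → ℝ) :=
  LinearMap.toContinuousLinearMap (dotProductBilin ℝ ℝ z)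

lemma coe_dotpCLM (z : Fin d → ℝ) : ⇑(dotpCLM z) = dotp z := rfl

lemma dotpCLM_ne_zero {z : Fin d → ℝ} (hz : z ≠ 0) : dotpCLM z ≠ 0 := by
  intro h
  exact hz (dotProduct_self_eq_zero.1 (DFunLike.congr_fun h z))

variable {P : Set (Fin d → ℝ)}

lemma IsPolytope.convex (hP : IsPolytope P) : Convex ℝ P := by
  obtain ⟨s, rfl⟩ := hP
  exact convex_convexHull ℝ _

lemma IsPolytope.isCompact (hP : IsPolytope P) : IsCompact P := by
  obtain ⟨s, rfl⟩ := hP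
  exact s.finite_toSet.isCompact_convexHull ℝ

lemma IsPolytope.finite_extremePoints (hP : IsPolytope P) : (P.extremePoints ℝ).Finite := by
  obtain ⟨s, rfl⟩ := hP
  exact s.finite_toSet.subset extremePoints_convexHull_subset

lemma IsPolytope.dotp_image_eq_Icc (hP : IsPolytope P) (hne : P.Nonempty) (z : Fin d → ℝ) :
    dotp z '' P = Set.Icc (tMin P z) (tMax P z) := by
  have hcont : Continuous (dotp z) := (dotpCLM z).continuous
  exact eq_Icc_of_connected_compact
    ⟨hne.image _, hP.convex.isPreconnected.image _ hcont.continuousOn⟩ (hP.isCompact.image hcont)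

lemma IsPolytope.tMin_lt_tMax (hP : IsPolytope P) (hint : (interior P).Nonempty)
    {z : Fin d → ℝ} (hz : z ≠ 0) : tMin P z < tMax P z := by
  have hopen : IsOpen (dotp z '' interior P) :=
    (dotpCLM z).isOpenMap_of_ne_zero (dotpCLM_ne_zero hz) _ isOpen_interior
  have hsub : dotp z '' interior P ⊆ interior (dotp z '' P) :=
    interior_maximal (Set.image_mono interior_subset) hopen
  have := (hint.image (dotp z)).mono hsub
  rwa [hP.dotp_image_eq_Icc (hint.mono interior_subset), interior_Icc, Set.nonempty_Ioo] at this

end Polytopes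

lemma IsPolytope.nVert_pieces_add {P : Set (Fin 2 → ℝ)} (hP : IsPolytope P)
    (hint : (interior P).Nonempty) {z : Fin 2 → ℝ} {t : ℝ}
    (ht : t ∈ Set.Ioo (tMin P z) (tMax P z)) (hvert : t ∉ dotp z '' P.extremePoints ℝ) :
    nVert (P ∩ {y | dotp z y ≤ t}) + nVert (P ∩ {y | t ≤ dotp z y}) = nVert P + 4 := by
  have himage := hP.dotp_image_eq_Icc (hint.mono interior_subset) z
  have hle : tMin P z ≤ tMax P z := (ht.1.trans ht.2).le
  obtain ⟨u, hu, hut⟩ : tMin P z ∈ dotp z '' P := himage ▸ Set.left_mem_Icc.2 hle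
  obtain ⟨v, hv, hvt⟩ : tMax P z ∈ dotp z '' P := himage ▸ Set.right_mem_Icc.2 hle
  have hsec : ((P ∩ {y | dotp z y = t}).extremePoints ℝ).ncard = 2 :=
    ncard_extremePoints_inter_fiber (Module.finrank_fin_fun ℝ) hP.convex hP.isCompact hint
      (dotpCLM z) hu hv (hut.trans_lt ht.1) (ht.2.trans_eq hvt.symm)
  have hadd := ncard_extremePoints_halfSpaces_add hP.convex hP.finite_extremePoints (dotpCLM z)
    hvert (Set.finite_of_ncard_ne_zero (hsec.trans_ne two_ne_zero))
  rwa [coe_dotpCLM, hsec] at hadd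

theorem parallelogram_critical_general {P : Set (Fin 2 → ℝ)} (hP : IsPolytope P)
    (hint : (interior P).Nonempty) {z : Fin 2 → ℝ} (hz : z ≠ 0) :
    (tMax P z - tMin P z)⁻¹ *
      ∫ t in tMin P z..tMax P z,
        (((nVert (P ∩ {y | dotp z y ≤ t}) : ℝ) +
          (nVert (P ∩ {y | t ≤ dotp z y}) : ℝ)) / 2) = ((nVert P : ℝ) + 4) / 2 := by
  refine inv_mul_intervalIntegral_eq_of_eq_on_Ioo_diff (hP.tMin_lt_tMax hint hz)
    (hP.finite_extremePoints.image (dotp z)).countable fun t ht hvert ↦ ?_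
  exact_mod_cast congrArg (fun n : ℕ ↦ (n : ℝ) / 2) (hP.nVert_pieces_add hint ht hvert)

section Parallelepipeds

lemma ncard_extremePoints_Icc_zero_one (ι : Type*) [Fintype ι] :
    ((Set.Icc (0 : ι → ℝ) 1).extremePoints ℝ).ncard = 2 ^ Fintype.card ι := by
  classical
  have hvertices : (Set.Icc (0 : ι → ℝ) 1).extremePoints ℝ =
      Fintype.piFinset fun _ : ι ↦ ({0, 1} : Finset ℝ) := by
    rw [← Set.pi_univ_Icc, extremePoints_pi, Fintype.coe_piFinset]
    simp only [Pi.zero_apply, Pi.one_apply, Set.extremePoints_Icc zero_le_one,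
      Finset.coe_insert, Finset.coe_singleton]
  rw [hvertices, Set.ncard_coe_finset, Fintype.card_piFinset, Finset.prod_const,
    Finset.card_pair zero_ne_one, Finset.card_univ]

variable {ι E : Type*} [Fintype ι]

lemma ncard_extremePoints_vadd_parallelepiped [AddCommGroup E] [Module ℝ E] {v : ι → E}
    (hv : LinearIndependent ℝ v) (x : E) :
    ((x +ᵥ parallelepiped v).extremePoints ℝ).ncard = 2 ^ Fintype.card ι := by
  let g : (ι → ℝ) →ᵃ[ℝ] E :=
    AffineMap.const ℝ (ι → ℝ) x + (Fintype.linearCombination ℝ v).toAffineMap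
  have hg : Function.Injective g :=
    (add_right_injective x).comp hv.fintypeLinearCombination_injective
  have himage : x +ᵥ parallelepiped v = g '' Set.Icc 0 1 := by
    rw [parallelepiped, ← Set.image_vadd, Set.image_image]
    rfl
  rw [himage, extremePoints_image_affineMap g hg, Set.ncard_image_of_injective _ hg,
    ncard_extremePoints_Icc_zero_one]

lemma interior_vadd_parallelepiped_nonempty [NormedAddCommGroup E] [NormedSpace ℝ E]
    [FiniteDimensional ℝ E] {v : ι → E} (hv : LinearIndependent ℝ v)
    (hcard : Fintype.card ι = Module.finrank ℝ E) (x : E) :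
    (interior (x +ᵥ parallelepiped v)).Nonempty := by
  let b := basisOfLinearIndependentOfCardEqFinrank' v hv hcard
  have hb : ⇑b = v := coe_basisOfLinearIndependentOfCardEqFinrank' v hv hcard
  rw [interior_vadd, Set.vadd_set_nonempty, ← hb]
  exact b.parallelepiped.interior_nonempty

lemma isPolytope_vadd_parallelepiped {d : ℕ} (x : Fin d → ℝ) (v : ι → Fin d → ℝ) :
    IsPolytope (x +ᵥ parallelepiped v) := by
  refine ⟨x +ᵥ ∑ i, ({0, v i} : Finset (Fin d → ℝ)), ?_⟩
  simp only [Finset.coe_vadd_finset, Finset.coe_sum, Finset.coe_pair, convexHull_vadd,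
    parallelepiped_eq_convexHull]

lemma singleton_add_segment_add_segment [AddCommGroup E] [Module ℝ E] (x a b : E) :
    {x} + segment ℝ 0 a + segment ℝ 0 b = x +ᵥ parallelepiped ![a, b] := by
  rw [parallelepiped_eq_sum_segment, Fin.sum_univ_two, add_assoc, Set.singleton_add]
  rfl

end Parallelepipeds

/-- A parallelogram is a critical polygon: for every direction, the
expected number of vertices of the two pieces of a uniform random cut equals `4`, its
number of vertices. -/
theorem parallelogram_critical (a b x : Fin 2 → ℝ)
    (hab : LinearIndependent ℝ ![a, b])
    (P : Set (Fin 2 → ℝ))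
    (hP : P = {x} + segment ℝ 0 a + segment ℝ 0 b)
    (z : Fin 2 → ℝ) (hz : z ≠ 0) :
    (tMax P z - tMin P z)⁻¹ *
      ∫ t in tMin P z..tMax P z,
        (((nVert (P ∩ {y | dotp z y ≤ t}) : ℝ) +
          (nVert (P ∩ {y | t ≤ dotp z y}) : ℝ)) / 2) = 4 := by
  have hP' : P = x +ᵥ parallelepiped ![a, b] :=
    hP.trans (singleton_add_segment_add_segment x a b)
  have hpoly : IsPolytope P := hP' ▸ isPolytope_vadd_parallelepiped x ![a, b]
  have hint : (interior P).Nonempty :=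
    hP' ▸ interior_vadd_parallelepiped_nonempty hab (Module.finrank_fin_fun ℝ).symm x
  have hvert : nVert P = 4 := hP' ▸ ncard_extremePoints_vadd_parallelepiped hab x
  rw [parallelogram_critical_general hpoly hint hz, hvert]
  norm_num
end
end

section
/- Let P = x + [0,a] + [0,b] + [0,c] ⊂ ℝ³ be a parallelepiped, where a, b, c ∈ ℝ³ are linearly independent, let z ∈ ℝ³ be nonzero, and let t⁻ = min{z·y : y ∈ P}, t⁺ = max{z·y : y ∈ P}. Then (1/(t⁺−t⁻)) · ∫_{t⁻}^{t⁺} ( (number of vertices of P ∩ {y : z·y ≤ t}) + (number of vertices of P ∩ {y : z·y ≥ t}) )/2 dt = 8, i.e., a parallelepiped is a critical polytope: the expected number of vertices of the two pieces of a uniform random cut orthogonal to any direction equals its number of vertices. -/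
open scoped Pointwise BigOperators

noncomputable section

/-!
The affine map `u ↦ x + ∑ i, u i • a i` carries vertices to vertices and turns the cut of the
parallelotope into the cut of the unit cube `[0,1]^n` by a hyperplane `w ⬝ᵥ u = s`, where
`w i = z · a i`. If the hyperplane avoids the vertices of the cube, each of these `2 ^ n` vertices
lies in exactly one of the two pieces, and every edge that is cut contributes one new vertex to
both. Half the total number of vertices is therefore `2 ^ (n - 1)` plus the number of cut edges.
An edge in direction `i` is cut for `s` in an open interval of length `|w i|`, and there are
`2 ^ (n - 1)` such edges, while `s` ranges over an interval of length `∑ i, |w i|`; so on average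
`2 ^ (n - 1)` edges are cut, whatever `w` is.
-/

open Set MeasureTheory Topology

section Extreme

theorem extremePoints_image_of_injective {𝕜 E F : Type*} [Ring 𝕜] [PartialOrder 𝕜]
    [IsOrderedRing 𝕜] [AddCommGroup E] [Module 𝕜 E] [AddCommGroup F] [Module 𝕜 F]
    (f : E →ᵃ[𝕜] F) (hf : Function.Injective f) (s : Set E) :
    extremePoints 𝕜 (f '' s) = f '' extremePoints 𝕜 s := by
  have apply_mem_iff (x : E) : f x ∈ extremePoints 𝕜 (f '' s) ↔ x ∈ extremePoints 𝕜 s := by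
    simp only [mem_extremePoints_iff_left, forall_mem_image, ← image_openSegment,
      hf.mem_set_image, hf.eq_iff]
  refine Subset.antisymm (fun y hy => ?_) (image_subset_iff.2 fun x => (apply_mem_iff x).2)
  obtain ⟨x, -, rfl⟩ := extremePoints_subset hy
  exact mem_image_of_mem f ((apply_mem_iff x).1 hy)

variable {E : Type*} [AddCommGroup E] [Module ℝ E]

theorem eq_zero_of_eventually_add_smul_mem {s : Set E} {x v : E} (hx : x ∈ extremePoints ℝ s)
    (hv : ∀ᶠ ε in 𝓝 (0 : ℝ), x + ε • v ∈ s) : v = 0 := by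
  obtain ⟨δ, hδ, hmem⟩ := Metric.eventually_nhds_iff.1 hv
  have hplus : x + (δ / 2) • v ∈ s := hmem (by simp [abs_of_pos hδ, hδ])
  have hminus : x + (-(δ / 2)) • v ∈ s := hmem (by simp [abs_of_pos hδ, hδ])
  have heq := hx.2 hplus hminus ⟨1 / 2, 1 / 2, by norm_num, by norm_num, by norm_num, by module⟩
  simpa [hδ.ne'] using heq

theorem mem_extremePoints_setOf_forall_le_iff {κ : Type*} [Finite κ] (f : κ → E →ₗ[ℝ] ℝ)
    (b : κ → ℝ) (x : E) :
    x ∈ extremePoints ℝ {y | ∀ k, f k y ≤ b k} ↔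
      (∀ k, f k x ≤ b k) ∧ ∀ v, (∀ k, f k x = b k → f k v = 0) → v = 0 := by
  constructor
  · refine fun hx => ⟨hx.1, fun v hv => eq_zero_of_eventually_add_smul_mem hx ?_⟩
    refine Filter.eventually_all.2 fun k => ?_
    rcases (hx.1 k).eq_or_lt with active | slack
    · exact .of_forall fun ε => by simp [hv k active, active]
    · have hcont : Filter.Tendsto (fun ε : ℝ => f k (x + ε • v)) (𝓝 0) (𝓝 (f k x)) :=
        Continuous.tendsto' (by simpa using by fun_prop) _ _ (by simp)
      exact (hcont.eventually_lt_const slack).mono fun _ => le_of_lt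
  · rintro ⟨hx, hker⟩
    refine ⟨hx, fun y hy z hz ⟨α, β, hα, hβ, hαβ, hxyz⟩ => ?_⟩
    refine sub_eq_zero.1 (hker (y - x) fun k active => ?_)
    have hcomb : α * f k y + β * f k z = b k := by simpa [← hxyz] using active
    have hbound : α * b k + β * b k = b k := by rw [← add_mul, hαβ, one_mul]
    have hy_active : f k y = b k :=
      (hy k).antisymm (le_of_mul_le_mul_left
        (by linarith [mul_le_mul_of_nonneg_left (hz k) hβ.le]) hα)
    rw [map_sub, hy_active, active, sub_self]

end Extreme

section OpenInterval

-- If `c = 0` then both sides are false, the right one because `(s - a) / 0 = 0`.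
theorem mem_uIoo_add_iff_div_mem_Ioo {𝕜 : Type*} [Field 𝕜] [LinearOrder 𝕜]
    [IsStrictOrderedRing 𝕜] {s a c : 𝕜} :
    s ∈ uIoo a (a + c) ↔ (s - a) / c ∈ Ioo (0 : 𝕜) 1 := by
  rcases lt_trichotomy c 0 with hc | rfl | hc
  · rw [uIoo_of_gt (by linarith), mem_Ioo, mem_Ioo, lt_div_iff_of_neg hc, div_lt_iff_of_neg hc]
    constructor <;> rintro ⟨h₁, h₂⟩ <;> constructor <;> linarith
  · simp
  · rw [uIoo_of_lt (by linarith), mem_Ioo, mem_Ioo, lt_div_iff₀ hc, div_lt_iff₀ hc]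
    constructor <;> rintro ⟨h₁, h₂⟩ <;> constructor <;> linarith

theorem intervalIntegrable_indicator_uIoo (l u a b : ℝ) :
    IntervalIntegrable ((uIoo a b).indicator 1 : ℝ → ℝ) volume l u :=
  intervalIntegrable_iff.2 <|
    (integrableOn_const (by simp) : IntegrableOn (fun _ => (1 : ℝ)) _ _).indicator measurableSet_Ioo

theorem integral_indicator_uIoo {l u a b : ℝ} (ha : a ∈ Icc l u) (hb : b ∈ Icc l u) :
    ∫ s in l..u, (uIoo a b).indicator (1 : ℝ → ℝ) s = |b - a| := by
  have hsub : uIoo a b ⊆ Ioc l u :=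
    (Ioo_subset_Ioo (le_inf ha.1 hb.1) (sup_le ha.2 hb.2)).trans Ioo_subset_Ioc_self
  rw [intervalIntegral.integral_of_le (ha.1.trans ha.2),
    setIntegral_indicator (t := uIoo a b) measurableSet_Ioo, inter_eq_right.2 hsub]
  simp [measureReal_def]

end OpenInterval

section Cube

variable {ι : Type*}

/-- The vertex of the unit cube `[0,1]^ι` with coordinate `1` exactly on `S`. -/
def cubeVertex (S : Finset ι) : ι → ℝ :=
  (S : Set ι).indicator 1

theorem cubeVertex_apply [DecidableEq ι] (S : Finset ι) (i : ι) :
    cubeVertex S i = if i ∈ S then 1 else 0 := by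
  simp [cubeVertex, indicator_apply]

theorem cubeVertex_apply_eq_zero_or_one (S : Finset ι) (i : ι) :
    cubeVertex S i = 0 ∨ cubeVertex S i = 1 := by
  classical
  rw [cubeVertex_apply]
  exact (ite_eq_or_eq ..).symm

theorem cubeVertex_injective : Function.Injective (cubeVertex (ι := ι)) :=
  fun _ _ h => Finset.coe_injective (indicator_one_inj ℝ h)

theorem cubeVertex_mem_Icc (S : Finset ι) : cubeVertex S ∈ Icc (0 : ι → ℝ) 1 := by
  refine ⟨fun i => ?_, fun i => ?_⟩ <;>
    rcases cubeVertex_apply_eq_zero_or_one S i with h | h <;> simp [h]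

theorem exists_cubeVertex_eq [Finite ι] {u : ι → ℝ} (hu : ∀ i, u i = 0 ∨ u i = 1) :
    ∃ S, cubeVertex S = u := by
  classical
  refine ⟨(toFinite {i | u i = 1}).toFinset, funext fun i => ?_⟩
  rcases hu i with h | h <;> simp [cubeVertex_apply, h]

section Edge

variable [DecidableEq ι]

/-- The point at parameter `τ` on the line through the vertices `S` and `insert i S` of the
cube, for `i ∉ S`; the edge between these vertices is the part `0 ≤ τ ≤ 1`. -/
def edgePoint (i : ι) (S : Finset ι) (τ : ℝ) : ι → ℝ :=
  cubeVertex S + Pi.single i τ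

theorem edgePoint_apply_self {i : ι} {S : Finset ι} (hi : i ∉ S) (τ : ℝ) :
    edgePoint i S τ i = τ := by
  simp [edgePoint, cubeVertex_apply, hi]

theorem edgePoint_apply_of_ne {i j : ι} (hj : j ≠ i) (S : Finset ι) (τ : ℝ) :
    edgePoint i S τ j = cubeVertex S j := by
  simp [edgePoint, hj]

theorem edgePoint_mem_Icc {i : ι} {S : Finset ι} (hi : i ∉ S) {τ : ℝ} (hτ : τ ∈ Icc (0 : ℝ) 1) :
    edgePoint i S τ ∈ Icc (0 : ι → ℝ) 1 := by
  simp only [mem_Icc, Pi.le_def, ← forall_and]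
  intro j
  rcases eq_or_ne j i with rfl | hj
  · rwa [edgePoint_apply_self hi]
  · rw [edgePoint_apply_of_ne hj]
    exact ⟨(cubeVertex_mem_Icc S).1 j, (cubeVertex_mem_Icc S).2 j⟩

theorem exists_edgePoint_eq [Finite ι] {u : ι → ℝ} {i : ι}
    (hu : ∀ j, j ≠ i → u j = 0 ∨ u j = 1) : ∃ S, i ∉ S ∧ edgePoint i S (u i) = u := by
  obtain ⟨S, hS⟩ : ∃ S, cubeVertex S = Function.update u i 0 :=
    exists_cubeVertex_eq fun j => by
      rcases eq_or_ne j i with rfl | hj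
      · simp
      · simpa [hj] using hu j hj
  have hi : i ∉ S := fun hi => by simpa [cubeVertex_apply, hi] using congrFun hS i
  refine ⟨S, hi, funext fun j => ?_⟩
  rcases eq_or_ne j i with rfl | hj
  · rw [edgePoint_apply_self hi]
  · rw [edgePoint_apply_of_ne hj, hS, Function.update_of_ne hj]

theorem edgePoint_inj {i j : ι} {S T : Finset ι} {σ τ : ℝ} (hi : i ∉ S) (hj : j ∉ T)
    (hσ : σ ∈ Ioo (0 : ℝ) 1) (h : edgePoint i S σ = edgePoint j T τ) : i = j ∧ S = T := by
  obtain rfl : i = j := by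
    by_contra hij
    have hσT : σ = cubeVertex T i := by
      rw [← edgePoint_apply_self hi σ, h, edgePoint_apply_of_ne hij]
    rcases cubeVertex_apply_eq_zero_or_one T i with h | h
    · exact hσ.1.ne' (hσT.trans h)
    · exact hσ.2.ne (hσT.trans h)
  obtain rfl : σ = τ := by rw [← edgePoint_apply_self hi σ, h, edgePoint_apply_self hj]
  exact ⟨rfl, cubeVertex_injective (add_right_cancel h)⟩

end Edge

variable [Fintype ι]

theorem dotProduct_cubeVertex (w : ι → ℝ) (S : Finset ι) :
    w ⬝ᵥ cubeVertex S = ∑ i ∈ S, w i := by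
  classical
  simp [dotProduct, cubeVertex_apply]

theorem isGreatest_dotProduct_image_Icc (w : ι → ℝ) :
    IsGreatest ((w ⬝ᵥ ·) '' Icc 0 1) (∑ i, (w i)⁺) := by
  refine ⟨⟨cubeVertex {i | 0 < w i}, cubeVertex_mem_Icc _, ?_⟩, ?_⟩
  · simp only [dotProduct_cubeVertex, Finset.sum_filter]
    refine Finset.sum_congr rfl fun i _ => ?_
    split_ifs with hi
    · exact (posPart_of_nonneg hi.le).symm
    · exact (posPart_of_nonpos (not_lt.1 hi)).symm
  · rintro _ ⟨u, hu, rfl⟩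
    refine Finset.sum_le_sum fun i _ => ?_
    calc w i * u i ≤ (w i)⁺ * u i := mul_le_mul_of_nonneg_right (le_posPart _) (hu.1 i)
      _ ≤ (w i)⁺ := mul_le_of_le_one_right (posPart_nonneg _) (hu.2 i)

theorem isLeast_dotProduct_image_Icc (w : ι → ℝ) :
    IsLeast ((w ⬝ᵥ ·) '' Icc 0 1) (-∑ i, (w i)⁻) := by
  obtain ⟨⟨u, hu, hmax⟩, hub⟩ := isGreatest_dotProduct_image_Icc (-w)
  simp only [neg_dotProduct, Pi.neg_apply, posPart_neg] at hmax hub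
  refine ⟨⟨u, hu, by simp [← hmax]⟩, ?_⟩
  rintro _ ⟨v, hv, rfl⟩
  exact neg_le.1 (hub ⟨v, hv, rfl⟩)

theorem sum_mem_Icc_neg_sum_negPart (w : ι → ℝ) (S : Finset ι) :
    ∑ i ∈ S, w i ∈ Icc (-∑ i, (w i)⁻) (∑ i, (w i)⁺) := by
  have hmem : ∑ i ∈ S, w i ∈ (w ⬝ᵥ ·) '' Icc 0 1 :=
    ⟨cubeVertex S, cubeVertex_mem_Icc S, dotProduct_cubeVertex w S⟩
  exact ⟨(isLeast_dotProduct_image_Icc w).2 hmem, (isGreatest_dotProduct_image_Icc w).2 hmem⟩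

theorem sum_posPart_sub_neg_sum_negPart (w : ι → ℝ) :
    ∑ i, (w i)⁺ - -∑ i, (w i)⁻ = ∑ i, |w i| := by
  simp only [sub_neg_eq_add, ← Finset.sum_add_distrib, posPart_add_negPart]

theorem dotProduct_edgePoint [DecidableEq ι] (w : ι → ℝ) (i : ι) (S : Finset ι) (τ : ℝ) :
    w ⬝ᵥ edgePoint i S τ = ∑ j ∈ S, w j + w i * τ := by
  rw [edgePoint, dotProduct_add, dotProduct_cubeVertex, dotProduct_single]

/-- The part of the unit cube `[0,1]^ι` in the half-space `w ⬝ᵥ u ≤ s`. The opposite part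
`s ≤ w ⬝ᵥ u` is `cutCube (-w) (-s)`. -/
def cutCube (w : ι → ℝ) (s : ℝ) : Set (ι → ℝ) :=
  Icc 0 1 ∩ {u | w ⬝ᵥ u ≤ s}

theorem mem_extremePoints_cutCube_iff {w : ι → ℝ} {s : ℝ} {u : ι → ℝ} :
    u ∈ extremePoints ℝ (cutCube w s) ↔
      u ∈ cutCube w s ∧ ∀ v : ι → ℝ, (∀ i, u i = 0 ∨ u i = 1 → v i = 0) →
        (w ⬝ᵥ u = s → w ⬝ᵥ v = 0) → v = 0 := by
  let f : ι ⊕ ι ⊕ Unit → (ι → ℝ) →ₗ[ℝ] ℝ :=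
    Sum.elim (fun i => -LinearMap.proj i) (Sum.elim LinearMap.proj fun _ => dotProductBilin ℝ ℝ w)
  let b : ι ⊕ ι ⊕ Unit → ℝ := Sum.elim 0 (Sum.elim 1 fun _ => s)
  have hcut : cutCube w s = {u | ∀ k, f k u ≤ b k} := by
    ext u
    simp [cutCube, f, b, Pi.le_def, and_assoc]
  rw [hcut, mem_extremePoints_setOf_forall_le_iff, mem_ofPred_eq]
  simp [f, b, or_imp, forall_and, and_imp]

theorem cubeVertex_mem_extremePoints_cutCube {w : ι → ℝ} {s : ℝ} {S : Finset ι}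
    (hS : ∑ i ∈ S, w i ≤ s) : cubeVertex S ∈ extremePoints ℝ (cutCube w s) := by
  refine mem_extremePoints_cutCube_iff.2
    ⟨⟨cubeVertex_mem_Icc S, (dotProduct_cubeVertex w S).trans_le hS⟩, fun v hv _ => ?_⟩
  exact funext fun i => hv i (cubeVertex_apply_eq_zero_or_one S i)

theorem edgePoint_mem_extremePoints_cutCube [DecidableEq ι] {w : ι → ℝ} {s τ : ℝ}
    {i : ι} {S : Finset ι} (hi : i ∉ S) (hτ : τ ∈ Ioo (0 : ℝ) 1) (hw : w i ≠ 0)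
    (hs : ∑ j ∈ S, w j + w i * τ = s) :
    edgePoint i S τ ∈ extremePoints ℝ (cutCube w s) := by
  have hdot : w ⬝ᵥ edgePoint i S τ = s := (dotProduct_edgePoint w i S τ).trans hs
  refine mem_extremePoints_cutCube_iff.2
    ⟨⟨edgePoint_mem_Icc hi (Ioo_subset_Icc_self hτ), hdot.le⟩, fun v hv hwv => ?_⟩
  have hv_ne (j : ι) (hj : j ≠ i) : v j = 0 :=
    hv j ((edgePoint_apply_of_ne hj S τ).symm ▸ cubeVertex_apply_eq_zero_or_one S j)
  have hwv_i : w i * v i = 0 := by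
    rw [← hwv hdot, dotProduct, Fintype.sum_eq_single i fun j hj => by simp [hv_ne j hj]]
  ext j
  rcases eq_or_ne j i with rfl | hj
  · exact (mul_eq_zero.1 hwv_i).resolve_left hw
  · exact hv_ne j hj

theorem dotProduct_eq_of_mem_extremePoints_cutCube {w : ι → ℝ} {s : ℝ} {u : ι → ℝ} {i : ι}
    (hu : u ∈ extremePoints ℝ (cutCube w s)) (hi : ¬(u i = 0 ∨ u i = 1)) :
    w i ≠ 0 ∧ w ⬝ᵥ u = s := by
  classical
  by_contra hcon
  have hzero : Pi.single i 1 = (0 : ι → ℝ) := by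
    refine (mem_extremePoints_cutCube_iff.1 hu).2 _ (fun j hj => ?_) fun hs => ?_
    · exact Pi.single_eq_of_ne (fun h : j = i => hi (h ▸ hj)) 1
    · simpa using not_not.1 fun hw => hcon ⟨hw, hs⟩
  simpa using congrFun hzero i

theorem eq_zero_or_one_of_mem_extremePoints_cutCube {w : ι → ℝ} {s : ℝ} {u : ι → ℝ} {i j : ι}
    (hu : u ∈ extremePoints ℝ (cutCube w s)) (hi : ¬(u i = 0 ∨ u i = 1)) (hji : j ≠ i) :
    u j = 0 ∨ u j = 1 := by
  classical
  by_contra hj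
  have hzero : Pi.single j (w i) - Pi.single i (w j) = (0 : ι → ℝ) := by
    refine (mem_extremePoints_cutCube_iff.1 hu).2 _ (fun k hk => ?_) fun _ => ?_
    · have hki : k ≠ i := fun h => hi (h ▸ hk)
      have hkj : k ≠ j := fun h => hj (h ▸ hk)
      simp [hki, hkj]
    · simp [dotProduct_sub, mul_comm]
  have hwi : w i = 0 := by simpa [hji] using congrFun hzero j
  exact (dotProduct_eq_of_mem_extremePoints_cutCube hu hi).1 hwi

section CutEdges

variable [DecidableEq ι]

variable (ι) in
/-- The edges of the unit cube `[0,1]^ι`: the pair `⟨i, S⟩` with `i ∉ S` stands for the edge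
between the vertices `S` and `insert i S`. -/
def cubeEdges : Finset (Σ _ : ι, Finset ι) :=
  Finset.univ.sigma fun i => (Finset.univ.erase i).powerset

theorem mem_cubeEdges {e : Σ _ : ι, Finset ι} : e ∈ cubeEdges ι ↔ e.1 ∉ e.2 := by
  simp [cubeEdges, Finset.subset_erase]

theorem two_mul_sum_cubeEdges (f : ι → ℝ) :
    2 * ∑ e ∈ cubeEdges ι, f e.1 = 2 ^ Fintype.card ι * ∑ i, f i := by
  rw [cubeEdges, Finset.sum_sigma, Finset.mul_sum, Finset.mul_sum]
  refine Finset.sum_congr rfl fun i _ => ?_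
  have hcard : (2 : ℝ) * 2 ^ (Fintype.card ι - 1) = 2 ^ Fintype.card ι :=
    mul_pow_sub_one (Fintype.card_pos_iff.2 ⟨i⟩).ne' 2
  simp [← hcard, mul_assoc]

open scoped Classical in
/-- The edges of the unit cube whose endpoints lie strictly on different sides of the hyperplane
`w ⬝ᵥ u = s`. -/
def cutEdges (w : ι → ℝ) (s : ℝ) : Finset (Σ _ : ι, Finset ι) :=
  {e ∈ cubeEdges ι | s ∈ uIoo (∑ j ∈ e.2, w j) (∑ j ∈ e.2, w j + w e.1)}

/-- The point where the hyperplane `w ⬝ᵥ u = s` meets the line through the edge `e`, provided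
`w e.1 ≠ 0`. -/
def cutPoint (w : ι → ℝ) (s : ℝ) (e : Σ _ : ι, Finset ι) : ι → ℝ :=
  edgePoint e.1 e.2 ((s - ∑ j ∈ e.2, w j) / w e.1)

theorem mem_cutEdges {w : ι → ℝ} {s : ℝ} {e : Σ _ : ι, Finset ι} :
    e ∈ cutEdges w s ↔ e.1 ∉ e.2 ∧ (s - ∑ j ∈ e.2, w j) / w e.1 ∈ Ioo (0 : ℝ) 1 := by
  simp only [cutEdges, Finset.mem_filter, mem_cubeEdges, mem_uIoo_add_iff_div_mem_Ioo]

theorem cutEdges_neg (w : ι → ℝ) (s : ℝ) : cutEdges (-w) (-s) = cutEdges w s := by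
  ext e
  simp only [mem_cutEdges, Pi.neg_apply, Finset.sum_neg_distrib, ← neg_sub', neg_div_neg_eq]

theorem injOn_cutPoint (w : ι → ℝ) (s : ℝ) : InjOn (cutPoint w s) (cutEdges w s) := by
  rintro ⟨i, S⟩ hS ⟨j, T⟩ hT h
  obtain ⟨hi, hτ⟩ := mem_cutEdges.1 hS
  obtain ⟨rfl, rfl⟩ := edgePoint_inj hi (mem_cutEdges.1 hT).1 hτ h
  rfl

theorem extremePoints_cutCube (w : ι → ℝ) (s : ℝ) :
    extremePoints ℝ (cutCube w s) =
      cubeVertex '' {S | ∑ i ∈ S, w i ≤ s} ∪ cutPoint w s '' cutEdges w s := by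
  ext u
  constructor
  · intro hu
    by_cases hvertex : ∀ i, u i = 0 ∨ u i = 1
    · obtain ⟨S, rfl⟩ := exists_cubeVertex_eq hvertex
      exact .inl ⟨S, (dotProduct_cubeVertex w S).symm.trans_le hu.1.2, rfl⟩
    · obtain ⟨i, hi⟩ := not_forall.1 hvertex
      obtain ⟨hw, hs⟩ := dotProduct_eq_of_mem_extremePoints_cutCube hu hi
      obtain ⟨S, hiS, hSu⟩ := exists_edgePoint_eq (u := u) (i := i)
        fun j => eq_zero_or_one_of_mem_extremePoints_cutCube hu hi
      have hdot : ∑ j ∈ S, w j + w i * u i = s := by rw [← dotProduct_edgePoint, hSu, hs]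
      have hτ : (s - ∑ j ∈ S, w j) / w i = u i := by
        rw [div_eq_iff hw]
        linarith
      have hui : u i ∈ Ioo (0 : ℝ) 1 :=
        ⟨(hu.1.1.1 i).lt_of_ne fun h => hi (.inl h.symm),
          (hu.1.1.2 i).lt_of_ne fun h => hi (.inr h)⟩
      exact .inr ⟨⟨i, S⟩, mem_cutEdges.2 ⟨hiS, hτ.symm ▸ hui⟩, by rw [cutPoint, hτ, hSu]⟩
  · rintro (⟨S, hS, rfl⟩ | ⟨⟨i, S⟩, he, rfl⟩)
    · exact cubeVertex_mem_extremePoints_cutCube hS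
    · obtain ⟨hi, hτ⟩ := mem_cutEdges.1 he
      have hw : w i ≠ 0 := (div_ne_zero_iff.1 hτ.1.ne').2
      exact edgePoint_mem_extremePoints_cutCube hi hτ hw (by field_simp; ring)

theorem disjoint_range_cubeVertex_image_cutPoint (w : ι → ℝ) (s : ℝ) :
    Disjoint (range cubeVertex) (cutPoint w s '' cutEdges w s) := by
  rw [Set.disjoint_left]
  rintro _ ⟨T, rfl⟩ ⟨⟨i, S⟩, he, h⟩
  obtain ⟨hi, hτ⟩ := mem_cutEdges.1 he
  have hTi : cubeVertex T i = (s - ∑ j ∈ S, w j) / w i := by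
    rw [← h, cutPoint, edgePoint_apply_self hi]
  rcases cubeVertex_apply_eq_zero_or_one T i with h | h
  · exact hτ.1.ne' (hTi.symm.trans h)
  · exact hτ.2.ne (hTi.symm.trans h)

theorem ncard_extremePoints_cutCube (w : ι → ℝ) (s : ℝ) :
    (extremePoints ℝ (cutCube w s)).ncard =
      {S : Finset ι | ∑ i ∈ S, w i ≤ s}.ncard + (cutEdges w s).card := by
  rw [extremePoints_cutCube, ncard_union_eq, ncard_image_of_injective _ cubeVertex_injective,
    (injOn_cutPoint w s).ncard_image, ncard_coe_finset]
  exact (disjoint_range_cubeVertex_image_cutPoint w s).mono_left (image_subset_range _ _)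

theorem ncard_extremePoints_cutCube_add_ncard_neg {w : ι → ℝ} {s : ℝ}
    (hs : ∀ S : Finset ι, ∑ i ∈ S, w i ≠ s) :
    (extremePoints ℝ (cutCube w s)).ncard + (extremePoints ℝ (cutCube (-w) (-s))).ncard =
      2 ^ Fintype.card ι + 2 * (cutEdges w s).card := by
  have hcompl : {S : Finset ι | ∑ i ∈ S, (-w) i ≤ -s} = {S | ∑ i ∈ S, w i ≤ s}ᶜ := by
    ext S
    simp [(hs S).symm.le_iff_lt]
  have hcard : {S : Finset ι | ∑ i ∈ S, w i ≤ s}.ncard + {S | ∑ i ∈ S, w i ≤ s}ᶜ.ncard =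
      2 ^ Fintype.card ι := by
    rw [ncard_add_ncard_compl, Nat.card_eq_fintype_card, Fintype.card_finset]
  rw [ncard_extremePoints_cutCube, ncard_extremePoints_cutCube, cutEdges_neg, hcompl, ← hcard]
  ring

theorem card_cutEdges_eq_sum_indicator (w : ι → ℝ) (s : ℝ) :
    ((cutEdges w s).card : ℝ) =
      ∑ e ∈ cubeEdges ι, (uIoo (∑ j ∈ e.2, w j) (∑ j ∈ e.2, w j + w e.1)).indicator 1 s := by
  classical
  simp only [cutEdges, Finset.natCast_card_filter, indicator_apply, Pi.one_apply]

theorem intervalIntegrable_card_cutEdges (w : ι → ℝ) (l u : ℝ) :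
    IntervalIntegrable (fun s => ((cutEdges w s).card : ℝ)) volume l u := by
  simp only [card_cutEdges_eq_sum_indicator]
  simpa only [Finset.sum_fn] using IntervalIntegrable.sum (cubeEdges ι)
    fun e _ => intervalIntegrable_indicator_uIoo l u _ _

theorem two_mul_integral_card_cutEdges (w : ι → ℝ) :
    2 * ∫ s in -∑ i, (w i)⁻..∑ i, (w i)⁺, ((cutEdges w s).card : ℝ) =
      2 ^ Fintype.card ι * ∑ i, |w i| := by
  simp only [card_cutEdges_eq_sum_indicator]
  rw [intervalIntegral.integral_finsetSum fun e _ => intervalIntegrable_indicator_uIoo _ _ _ _,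
    ← two_mul_sum_cubeEdges]
  congr 1
  refine Finset.sum_congr rfl fun e he => ?_
  have hinsert : ∑ j ∈ e.2, w j + w e.1 = ∑ j ∈ insert e.1 e.2, w j := by
    rw [Finset.sum_insert (mem_cubeEdges.1 he), add_comm]
  rw [hinsert, integral_indicator_uIoo (sum_mem_Icc_neg_sum_negPart w _)
    (sum_mem_Icc_neg_sum_negPart w _), ← hinsert, add_sub_cancel_left]

end CutEdges

theorem integral_ncard_extremePoints_cutCube (w : ι → ℝ) :
    ∫ s in -∑ i, (w i)⁻..∑ i, (w i)⁺,
        (((extremePoints ℝ (cutCube w s)).ncard : ℝ) +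
          (extremePoints ℝ (cutCube (-w) (-s))).ncard) / 2 =
      2 ^ Fintype.card ι * ∑ i, |w i| := by
  classical
  calc
    _ = ∫ s in -∑ i, (w i)⁻..∑ i, (w i)⁺,
          ((2 : ℝ) ^ Fintype.card ι / 2 + (cutEdges w s).card) := by
      refine intervalIntegral.integral_congr_ae ?_
      filter_upwards [(countable_range fun S : Finset ι => ∑ i ∈ S, w i).ae_notMem volume]
        with s hs _
      have hcount := ncard_extremePoints_cutCube_add_ncard_neg fun S h => hs ⟨S, h⟩
      rw [← Nat.cast_add, hcount]
      push_cast
      ring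
    _ = _ := by
      rw [intervalIntegral.integral_add (by simp) (intervalIntegrable_card_cutEdges w _ _),
        intervalIntegral.integral_const, sum_posPart_sub_neg_sum_negPart, smul_eq_mul]
      linarith [two_mul_integral_card_cutEdges w]

end Cube

section Parallelotope

variable {ι E : Type*} [Fintype ι] [AddCommGroup E] [Module ℝ E]

/-- The affine parametrization `u ↦ x + ∑ i, u i • a i`; it maps the unit cube `[0,1]^ι` onto the
parallelotope with corner `x` and edge vectors `a i`. -/
def parallelotopeMap (x : E) (a : ι → E) : (ι → ℝ) →ᵃ[ℝ] E :=
  AffineMap.const ℝ _ x + (Fintype.linearCombination ℝ a).toAffineMap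

theorem parallelotopeMap_apply (x : E) (a : ι → E) (u : ι → ℝ) :
    parallelotopeMap x a u = x + ∑ i, u i • a i :=
  rfl

theorem parallelotopeMap_injective {a : ι → E} (ha : LinearIndependent ℝ a) (x : E) :
    Function.Injective (parallelotopeMap x a) :=
  (add_right_injective x).comp (linearIndependent_iff_injective_fintypeLinearCombination.1 ha)

theorem image_parallelotopeMap_Icc (x : E) (a : ι → E) :
    parallelotopeMap x a '' Icc 0 1 = {x} + ∑ i, segment ℝ 0 (a i) := by
  rw [← parallelepiped_eq_sum_segment, singleton_add, parallelepiped, image_image]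
  rfl

variable {d : ℕ} {a : ι → Fin d → ℝ}

theorem dotp_parallelotopeMap (z x : Fin d → ℝ) (a : ι → Fin d → ℝ) (u : ι → ℝ) :
    dotp z (parallelotopeMap x a u) = dotp z x + (fun i => dotp z (a i)) ⬝ᵥ u := by
  change z ⬝ᵥ _ = z ⬝ᵥ x + (fun i => z ⬝ᵥ a i) ⬝ᵥ u
  simp only [parallelotopeMap_apply, dotProduct_add, dotProduct_sum, dotProduct_smul,
    smul_eq_mul, mul_comm (u _)]
  rfl

theorem dotp_image_parallelotope (z x : Fin d → ℝ) (a : ι → Fin d → ℝ) :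
    dotp z '' (parallelotopeMap x a '' Icc 0 1) =
      (dotp z x + ·) '' (((fun i => dotp z (a i)) ⬝ᵥ ·) '' Icc 0 1) := by
  simp only [image_image, dotp_parallelotopeMap]

theorem tMin_parallelotope (z x : Fin d → ℝ) (a : ι → Fin d → ℝ) :
    tMin (parallelotopeMap x a '' Icc 0 1) z = dotp z x - ∑ i, (dotp z (a i))⁻ := by
  rw [tMin, dotp_image_parallelotope, sub_eq_add_neg]
  exact ((add_right_mono (a := dotp z x)).map_isLeast (isLeast_dotProduct_image_Icc _)).csInf_eq

theorem tMax_parallelotope (z x : Fin d → ℝ) (a : ι → Fin d → ℝ) :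
    tMax (parallelotopeMap x a '' Icc 0 1) z = dotp z x + ∑ i, (dotp z (a i))⁺ := by
  rw [tMax, dotp_image_parallelotope]
  exact ((add_right_mono (a := dotp z x)).map_isGreatest
    (isGreatest_dotProduct_image_Icc _)).csSup_eq

theorem tMax_sub_tMin_parallelotope (z x : Fin d → ℝ) (a : ι → Fin d → ℝ) :
    tMax (parallelotopeMap x a '' Icc 0 1) z - tMin (parallelotopeMap x a '' Icc 0 1) z =
      ∑ i, |dotp z (a i)| := by
  rw [tMax_parallelotope, tMin_parallelotope, ← sum_posPart_sub_neg_sum_negPart]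
  ring

theorem nVert_parallelotope_inter_le (ha : LinearIndependent ℝ a) (z x : Fin d → ℝ) (t : ℝ) :
    nVert (parallelotopeMap x a '' Icc 0 1 ∩ {y | dotp z y ≤ t}) =
      (extremePoints ℝ (cutCube (fun i => dotp z (a i)) (t - dotp z x))).ncard := by
  have hcut : cutCube (fun i => dotp z (a i)) (t - dotp z x) =
      Icc 0 1 ∩ parallelotopeMap x a ⁻¹' {y | dotp z y ≤ t} := by
    ext u
    simp [cutCube, dotp_parallelotopeMap, le_sub_iff_add_le']
  rw [nVert, ← image_inter_preimage, ← hcut,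
    extremePoints_image_of_injective _ (parallelotopeMap_injective ha x),
    ncard_image_of_injective _ (parallelotopeMap_injective ha x)]

theorem dotp_neg_left (z y : Fin d → ℝ) : dotp (-z) y = -dotp z y :=
  neg_dotProduct z y

theorem nVert_parallelotope_inter_ge (ha : LinearIndependent ℝ a) (z x : Fin d → ℝ) (t : ℝ) :
    nVert (parallelotopeMap x a '' Icc 0 1 ∩ {y | t ≤ dotp z y}) =
      (extremePoints ℝ (cutCube (-fun i => dotp z (a i)) (-(t - dotp z x)))).ncard := by
  have hneg := nVert_parallelotope_inter_le ha (-z) x (-t)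
  simp only [dotp_neg_left, neg_le_neg_iff] at hneg
  rw [hneg, neg_sub_neg, neg_sub]
  rfl

theorem exists_dotp_ne_zero {a : Fin d → Fin d → ℝ} (ha : LinearIndependent ℝ a)
    {z : Fin d → ℝ} (hz : z ≠ 0) : ∃ i, dotp z (a i) ≠ 0 := by
  by_contra! horth
  have hinj : Function.Injective (Matrix.of a).mulVec :=
    Matrix.mulVec_injective_iff_isUnit.2 (Matrix.linearIndependent_rows_iff_isUnit.1 ha)
  refine hz (hinj ?_)
  rw [Matrix.mulVec_zero]
  exact funext fun i => (dotProduct_comm _ _).trans (horth i)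

theorem integral_nVert_parallelotope (ha : LinearIndependent ℝ a) (z x : Fin d → ℝ) :
    let P := parallelotopeMap x a '' Icc 0 1
    ∫ t in tMin P z..tMax P z,
        (((nVert (P ∩ {y | dotp z y ≤ t}) : ℝ) + (nVert (P ∩ {y | t ≤ dotp z y}) : ℝ)) / 2) =
      2 ^ Fintype.card ι * ∑ i, |dotp z (a i)| := by
  simp only [nVert_parallelotope_inter_le ha, nVert_parallelotope_inter_ge ha]
  rw [intervalIntegral.integral_comp_sub_right (fun s =>
      (((extremePoints ℝ (cutCube (fun i => dotp z (a i)) s)).ncard : ℝ) +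
        (extremePoints ℝ (cutCube (-fun i => dotp z (a i)) (-s))).ncard) / 2),
    tMin_parallelotope, tMax_parallelotope, sub_sub_cancel_left, add_sub_cancel_left,
    integral_ncard_extremePoints_cutCube]

theorem parallelepiped_critical_general (ha : LinearIndependent ℝ a) (x z : Fin d → ℝ)
    (hz : ∃ i, dotp z (a i) ≠ 0) (P : Set (Fin d → ℝ))
    (hP : P = {x} + ∑ i, segment ℝ 0 (a i)) :
    (tMax P z - tMin P z)⁻¹ *
      ∫ t in tMin P z..tMax P z,
        (((nVert (P ∩ {y | dotp z y ≤ t}) : ℝ) +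
          (nVert (P ∩ {y | t ≤ dotp z y}) : ℝ)) / 2) = 2 ^ Fintype.card ι := by
  obtain ⟨i, hi⟩ := hz
  have hwidth : ∑ i, |dotp z (a i)| ≠ 0 :=
    (Finset.sum_pos' (fun i _ => abs_nonneg _) ⟨i, Finset.mem_univ i, abs_pos.2 hi⟩).ne'
  rw [hP, ← image_parallelotopeMap_Icc, tMax_sub_tMin_parallelotope,
    integral_nVert_parallelotope ha, mul_left_comm, inv_mul_cancel₀ hwidth, mul_one]

end Parallelotope

/-- A parallelepiped is a critical polytope: for every direction, the
expected number of vertices of the two pieces of a uniform random cut equals `8`, its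
number of vertices. -/
theorem parallelepiped_critical (a b c x : Fin 3 → ℝ)
    (habc : LinearIndependent ℝ ![a, b, c])
    (P : Set (Fin 3 → ℝ))
    (hP : P = {x} + segment ℝ 0 a + segment ℝ 0 b + segment ℝ 0 c)
    (z : Fin 3 → ℝ) (hz : z ≠ 0) :
    (tMax P z - tMin P z)⁻¹ *
      ∫ t in tMin P z..tMax P z,
        (((nVert (P ∩ {y | dotp z y ≤ t}) : ℝ) +
          (nVert (P ∩ {y | t ≤ dotp z y}) : ℝ)) / 2) = 8 := by
  have hsum : P = {x} + ∑ i, segment ℝ 0 (![a, b, c] i) := by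
    simp only [hP, Fin.sum_univ_three, ← add_assoc]
    rfl
  rw [parallelepiped_critical_general habc x z (exists_dotp_ne_zero habc hz) P hsum]
  norm_num
end
end

section
/- Let k ≥ 2 and ℓ ≥ 2, and let V ⊂ ℝ³ be a set of n = ℓk pairwise linearly independent nonzero vectors partitioned into groups V₁, …, V_ℓ of size k each, such that each group V_j spans a 2-dimensional subspace, no vector of V outside V_j lies in the span of V_j, and for any two vectors u, v from different groups the only elements of V lying in span{u, v} are u and v. Let P be the zonotope generated by V. Then A(P,z) = 2(n − k + 1) for every nonzero z ∈ ℝ³ (equivalently, deg v = 1 + (ℓ−1)k for every v ∈ V in the hypergraph ℱ). -/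
open scoped Pointwise BigOperators

noncomputable section

/-!
A vertex of the section `P(z,t)` at a generic height `t` is the point where the hyperplane `z·x = t`
crosses an edge of `P`. An edge parallel to the generator `v` is crossed for a set of heights `t` of
length `|z·v|`, while `t⁺ - t⁻ = ∑ v, |z·v|`, so `A(P,z)` is the mean of the numbers of edges
parallel to the generators `v`, with weights `|z·v|`.

The edges parallel to `v` correspond to the sign patterns of the other generators `w` on the plane
of functionals that vanish at `v`. There every `w` vanishes along a line, and two of them along the
same line exactly when they span the same plane with `v`. So there are `deg v` lines through the
origin, cutting the plane into `2 deg v` sectors. If `deg v` has the same value `m` for all `v`,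
then `A(P,z) = 2m` whatever `z` is.

In the example, the planes through `v ∈ Vⱼ` are `span Vⱼ` and the planes `span {v, w}` for the
`(ℓ - 1)k` generators `w` outside `Vⱼ`, so `m = 1 + (ℓ - 1)k`.
-/

open scoped Topology

theorem finrank_inf_ker_add_one {K E : Type*} [Field K] [AddCommGroup E] [Module K E]
    {H : Submodule K E} [FiniteDimensional K H] {f : Module.Dual K E}
    (hf : ¬H ≤ LinearMap.ker f) :
    Module.finrank K ↥(H ⊓ LinearMap.ker f) + 1 = Module.finrank K H := by
  have hne : f.domRestrict H ≠ 0 := fun h ↦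
    hf fun y hy ↦ LinearMap.congr_fun h (⟨y, hy⟩ : H)
  rw [← Module.Dual.finrank_ker_add_one_of_ne_zero hne, LinearMap.ker_domRestrict,
    ← Submodule.finrank_map_subtype_eq, Submodule.map_comap_subtype]

section Arrangements

variable {ι E : Type*} [DecidableEq ι] [AddCommGroup E] [Module ℝ E]
  {a : ι → Module.Dual ℝ E} {H : Submodule ℝ E} {T U : Finset ι} {i : ι} {y y' : E}

/-- The functionals `a i` with `i ∈ U` have sign pattern `T` at `y`: they are positive for `i ∈ T`
and negative for the other `i ∈ U`. -/
def HasSignPattern (a : ι → Module.Dual ℝ E) (U T : Finset ι) (y : E) : Prop :=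
  (∀ i ∈ T, 0 < a i y) ∧ ∀ i ∈ U \ T, a i y < 0

open Classical in
/-- The sign patterns, encoded as in `HasSignPattern`, of the functionals `a i` with `i ∈ U` at
points of the subspace `H`; these index the chambers that the hyperplanes `a i = 0` cut out of
`H`. -/
def signPatterns (a : ι → Module.Dual ℝ E) (H : Submodule ℝ E) (U : Finset ι) :
    Finset (Finset ι) :=
  {T ∈ U.powerset | ∃ y ∈ H, HasSignPattern a U T y}

theorem mem_signPatterns :
    T ∈ signPatterns a H U ↔ T ⊆ U ∧ ∃ y ∈ H, HasSignPattern a U T y := by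
  simp [signPatterns]

theorem HasSignPattern.ne_zero (h : HasSignPattern a U T y) (hi : i ∈ U) : a i y ≠ 0 := by
  by_cases hiT : i ∈ T
  · exact (h.1 i hiT).ne'
  · exact (h.2 i (Finset.mem_sdiff.2 ⟨hi, hiT⟩)).ne

theorem HasSignPattern.add_smul {r : ℝ} (h : HasSignPattern a U T y)
    (h' : HasSignPattern a U T y') (hr : 0 < r) : HasSignPattern a U T (y + r • y') := by
  refine ⟨fun i hi ↦ ?_, fun i hi ↦ ?_⟩
  · simpa using add_pos (h.1 i hi) (mul_pos hr (h'.1 i hi))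
  · simpa using add_neg (h.2 i hi) (mul_neg_of_pos_of_neg hr (h'.2 i hi))

theorem HasSignPattern.eventually_add_smul (h : HasSignPattern a U T y) (y' : E) :
    ∀ᶠ r : ℝ in 𝓝 0, HasSignPattern a U T (y + r • y') := by
  have hlim (i : ι) : Filter.Tendsto (fun r : ℝ ↦ a i (y + r • y')) (𝓝 0) (𝓝 (a i y)) := by
    have hcont : Continuous fun r : ℝ ↦ a i y + r * a i y' := by fun_prop
    simpa using hcont.tendsto 0
  refine ((Filter.eventually_all_finset T).2 fun i hi ↦ ?_).and
    ((Filter.eventually_all_finset (U \ T)).2 fun i hi ↦ ?_)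
  · exact (hlim i).eventually_const_lt (h.1 i hi)
  · exact (hlim i).eventually_lt_const (h.2 i hi)

theorem HasSignPattern.exists_pos_add_sub (h : HasSignPattern a U T y) (y' : E) :
    ∃ r : ℝ, 0 < r ∧ HasSignPattern a U T (y + r • y') ∧ HasSignPattern a U T (y - r • y') := by
  have hev := (h.eventually_add_smul y').and (h.eventually_add_smul (-y'))
  obtain ⟨r, ⟨hadd, hsub⟩, hr⟩ :=
    ((hev.filter_mono nhdsWithin_le_nhds).and (self_mem_nhdsWithin (s := Set.Ioi 0))).exists
  exact ⟨r, hr, hadd, by simpa [sub_eq_add_neg] using hsub⟩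

theorem hasSignPattern_insert_insert (hi : i ∉ U) :
    HasSignPattern a (insert i U) (insert i T) y ↔ 0 < a i y ∧ HasSignPattern a U T y := by
  rw [HasSignPattern, HasSignPattern, Finset.insert_sdiff_insert, Finset.sdiff_insert_of_notMem hi,
    Finset.forall_mem_insert, and_assoc]

theorem hasSignPattern_insert (hi : i ∉ T) :
    HasSignPattern a (insert i U) T y ↔ a i y < 0 ∧ HasSignPattern a U T y := by
  rw [HasSignPattern, HasSignPattern, Finset.insert_sdiff_of_notMem _ hi,
    Finset.forall_mem_insert, and_left_comm]

theorem exists_mem_pos_of_not_le_ker {f : Module.Dual ℝ E} (hf : ¬H ≤ LinearMap.ker f) :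
    ∃ y ∈ H, 0 < f y := by
  obtain ⟨y, hyH, hy⟩ := SetLike.not_le_iff_exists.1 hf
  rcases lt_or_gt_of_ne (show f y ≠ 0 from hy) with hneg | hpos
  · exact ⟨-y, H.neg_mem hyH, by simpa using hneg⟩
  · exact ⟨y, hyH, hpos⟩

theorem mem_memberSubfamily_signPatterns (hi : i ∉ U) :
    T ∈ (signPatterns a H (insert i U)).memberSubfamily i ↔
      T ⊆ U ∧ ∃ y ∈ H, 0 < a i y ∧ HasSignPattern a U T y := by
  have hsub : insert i T ⊆ insert i U ∧ i ∉ T ↔ T ⊆ U :=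
    ⟨fun ⟨h, hiT⟩ ↦ (Finset.insert_subset_insert_iff hiT).1 h,
      fun h ↦ ⟨Finset.insert_subset_insert i h, fun hiT ↦ hi (h hiT)⟩⟩
  simp only [Finset.mem_memberSubfamily, mem_signPatterns, hasSignPattern_insert_insert hi]
  rw [and_right_comm, hsub]

theorem mem_nonMemberSubfamily_signPatterns (hi : i ∉ U) :
    T ∈ (signPatterns a H (insert i U)).nonMemberSubfamily i ↔
      T ⊆ U ∧ ∃ y ∈ H, a i y < 0 ∧ HasSignPattern a U T y := by
  have hsub : T ⊆ insert i U ∧ i ∉ T ↔ T ⊆ U := by grind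
  rw [Finset.mem_nonMemberSubfamily, mem_signPatterns, and_right_comm, hsub]
  refine and_congr_right fun hT ↦ ?_
  simp only [hasSignPattern_insert fun h ↦ hi (hT h)]

theorem memberSubfamily_union_nonMemberSubfamily_signPatterns (hi : i ∉ U)
    (hH : ¬H ≤ LinearMap.ker (a i)) :
    (signPatterns a H (insert i U)).memberSubfamily i ∪
      (signPatterns a H (insert i U)).nonMemberSubfamily i = signPatterns a H U := by
  ext T
  rw [Finset.mem_union, mem_memberSubfamily_signPatterns hi,
    mem_nonMemberSubfamily_signPatterns hi, mem_signPatterns, ← and_or_left]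
  refine and_congr_right fun _ ↦ ⟨?_, fun ⟨y, hyH, hy⟩ ↦ ?_⟩
  · rintro (⟨y, hyH, -, hy⟩ | ⟨y, hyH, -, hy⟩) <;> exact ⟨y, hyH, hy⟩
  rcases lt_trichotomy (a i y) 0 with hneg | hzero | hpos
  · exact .inr ⟨y, hyH, hneg, hy⟩
  · obtain ⟨y', hy'H, hy'⟩ := exists_mem_pos_of_not_le_ker hH
    obtain ⟨r, hr, hadd, -⟩ := hy.exists_pos_add_sub y'
    refine .inl ⟨y + r • y', H.add_mem hyH (H.smul_mem r hy'H), ?_, hadd⟩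
    simpa [hzero] using mul_pos hr hy'
  · exact .inl ⟨y, hyH, hpos, hy⟩

theorem memberSubfamily_inter_nonMemberSubfamily_signPatterns (hi : i ∉ U)
    (hH : ¬H ≤ LinearMap.ker (a i)) :
    (signPatterns a H (insert i U)).memberSubfamily i ∩
        (signPatterns a H (insert i U)).nonMemberSubfamily i =
      signPatterns a (H ⊓ LinearMap.ker (a i)) U := by
  ext T
  rw [Finset.mem_inter, mem_memberSubfamily_signPatterns hi,
    mem_nonMemberSubfamily_signPatterns hi, mem_signPatterns, ← and_and_left]
  refine and_congr_right fun _ ↦ ⟨?_, fun ⟨y, ⟨hyH, hzero⟩, hy⟩ ↦ ?_⟩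
  · rintro ⟨⟨y, hyH, hpos, hy⟩, y', hy'H, hneg, hy'⟩
    have hr : 0 < a i y / -a i y' := div_pos hpos (neg_pos.2 hneg)
    have hker : a i (y + (a i y / -a i y') • y') = 0 := by
      rw [map_add, map_smul, smul_eq_mul, div_neg, neg_mul, div_mul_cancel₀ _ hneg.ne,
        add_neg_cancel]
    exact ⟨_, ⟨H.add_mem hyH (H.smul_mem _ hy'H), hker⟩, hy.add_smul hy' hr⟩
  · have hzero : a i y = 0 := hzero
    obtain ⟨y', hy'H, hy'⟩ := exists_mem_pos_of_not_le_ker hH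
    obtain ⟨r, hr, hadd, hsub⟩ := hy.exists_pos_add_sub y'
    have hry' := H.smul_mem r hy'H
    exact ⟨⟨y + r • y', H.add_mem hyH hry', by simpa [hzero] using mul_pos hr hy', hadd⟩,
      y - r • y', H.sub_mem hyH hry', by simpa [hzero] using mul_pos hr hy', hsub⟩

theorem card_signPatterns_insert (hi : i ∉ U) (hH : ¬H ≤ LinearMap.ker (a i)) :
    (signPatterns a H (insert i U)).card =
      (signPatterns a H U).card + (signPatterns a (H ⊓ LinearMap.ker (a i)) U).card := by
  rw [← memberSubfamily_union_nonMemberSubfamily_signPatterns hi hH,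
    ← memberSubfamily_inter_nonMemberSubfamily_signPatterns hi hH, Finset.card_union_add_card_inter,
    Finset.card_memberSubfamily_add_card_nonMemberSubfamily]

theorem signPatterns_empty : signPatterns a H ∅ = {∅} := by
  ext T
  rw [mem_signPatterns, Finset.subset_empty, Finset.mem_singleton, and_iff_left_iff_imp]
  rintro rfl
  exact ⟨0, H.zero_mem, by simp [HasSignPattern]⟩

theorem signPatterns_eq_empty (hi : i ∈ U) (hH : H ≤ LinearMap.ker (a i)) :
    signPatterns a H U = ∅ := by
  refine Finset.eq_empty_of_forall_notMem fun T hT ↦ ?_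
  obtain ⟨-, y, hyH, hy⟩ := mem_signPatterns.1 hT
  exact hy.ne_zero hi (hH hyH)

theorem card_signPatterns_of_finrank_eq_one (hrank : Module.finrank ℝ H = 1)
    (hU : U.Nonempty) (hH : ∀ i ∈ U, ¬H ≤ LinearMap.ker (a i)) :
    (signPatterns a H U).card = 2 := by
  have : FiniteDimensional ℝ H := Module.finite_of_finrank_eq_succ hrank
  have hbot (i : ι) (hi : ¬H ≤ LinearMap.ker (a i)) : H ⊓ LinearMap.ker (a i) = ⊥ := by
    have := finrank_inf_ker_add_one hi
    exact Submodule.finrank_eq_zero.1 (by omega)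
  induction hU using Finset.Nonempty.cons_induction with
  | singleton i =>
    have hi := hH i (Finset.mem_singleton_self i)
    rw [← insert_empty_eq, card_signPatterns_insert (Finset.notMem_empty i) hi, signPatterns_empty,
      signPatterns_empty, Finset.card_singleton]
  | cons i U hiU hU ih =>
    obtain ⟨j, hj⟩ := hU
    have hi := hH i (Finset.mem_cons_self i U)
    rw [Finset.cons_eq_insert, card_signPatterns_insert hiU hi, hbot i hi,
      signPatterns_eq_empty hj bot_le, Finset.card_empty, add_zero]
    exact ih fun j hj ↦ hH j (Finset.mem_cons_of_mem hj)

theorem card_signPatterns_of_finrank_eq_two (hrank : Module.finrank ℝ H = 2)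
    (hU : U.Nonempty) (hH : ∀ i ∈ U, ¬H ≤ LinearMap.ker (a i))
    [DecidableEq (Submodule ℝ E)] :
    (signPatterns a H U).card = 2 * (U.image fun i ↦ H ⊓ LinearMap.ker (a i)).card := by
  have : FiniteDimensional ℝ H := Module.finite_of_finrank_eq_succ hrank
  have hline (i : ι) (hi : ¬H ≤ LinearMap.ker (a i)) :
      Module.finrank ℝ ↥(H ⊓ LinearMap.ker (a i)) = 1 := by
    have := finrank_inf_ker_add_one hi
    omega
  induction hU using Finset.Nonempty.cons_induction with
  | singleton i =>
    have hi := hH i (Finset.mem_singleton_self i)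
    rw [← insert_empty_eq, card_signPatterns_insert (Finset.notMem_empty i) hi, signPatterns_empty,
      signPatterns_empty]
    simp
  | cons i U hiU hU ih =>
    have hi := hH i (Finset.mem_cons_self i U)
    have hHU : ∀ j ∈ U, ¬H ≤ LinearMap.ker (a j) := fun j hj ↦ hH j (Finset.mem_cons_of_mem hj)
    rw [Finset.cons_eq_insert, card_signPatterns_insert hiU hi, ih hHU, Finset.image_insert]
    by_cases hmem : H ⊓ LinearMap.ker (a i) ∈ U.image fun j ↦ H ⊓ LinearMap.ker (a j)
    · obtain ⟨j, hj, hji⟩ := Finset.mem_image.1 hmem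
      rw [Finset.insert_eq_of_mem hmem, signPatterns_eq_empty hj (hji ▸ inf_le_right),
        Finset.card_empty, add_zero]
    · have hcross : ∀ j ∈ U, ¬H ⊓ LinearMap.ker (a i) ≤ LinearMap.ker (a j) := by
        intro j hj hle
        refine hmem (Finset.mem_image.2 ⟨j, hj, ?_⟩)
        refine (Submodule.eq_of_le_of_finrank_eq (le_inf inf_le_left hle) ?_).symm
        rw [hline i hi, hline j (hHU j hj)]
      rw [Finset.card_insert_of_notMem hmem,
        card_signPatterns_of_finrank_eq_one (hline i hi) hU hcross, mul_add_one]

end Arrangements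

section Separation

variable {E : Type*} [AddCommGroup E] [Module ℝ E]

theorem apply_eq_zero_of_forall_lt {L : Submodule ℝ E} {f : Module.Dual ℝ E} {r : ℝ}
    (hf : ∀ x ∈ L, r < f x) {x : E} (hx : x ∈ L) : f x = 0 := by
  by_contra hne
  have h := hf _ (L.smul_mem (r / f x) hx)
  rw [map_smul, smul_eq_mul, div_mul_cancel₀ _ hne] at h
  exact h.false

/-- Gordan's theorem modulo a subspace: separate the standard simplex from the space of linear
relations, and push the separating functional down to `E`. -/
theorem exists_mem_dualAnnihilator_pos_or_exists_mem_stdSimplex {ι : Type*} [Fintype ι]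
    (b : ι → E) (L : Submodule ℝ E) :
    (∃ y ∈ L.dualAnnihilator, ∀ i, 0 < y (b i)) ∨
      ∃ w ∈ stdSimplex ℝ ι, ∑ i, w i • b i ∈ L := by
  classical
  let φ : (ι → ℝ) →ₗ[ℝ] E ⧸ L := L.mkQ ∘ₗ Fintype.linearCombination ℝ b
  by_cases hdisj : Disjoint (stdSimplex ℝ ι) (LinearMap.ker φ)
  · left
    obtain ⟨f, r, s, hsimplex, hrs, hker⟩ := geometric_hahn_banach_compact_closed
      (convex_stdSimplex ℝ ι) (isCompact_stdSimplex ℝ ι) (LinearMap.ker φ).convex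
      (Submodule.closed_of_finiteDimensional _) hdisj
    have hs : s < 0 := by simpa using hker 0 (LinearMap.ker φ).zero_mem
    have hf : -f.toLinearMap ∈ (LinearMap.ker φ).dualAnnihilator := by
      rw [Submodule.mem_dualAnnihilator]
      intro w hw
      simpa using apply_eq_zero_of_forall_lt (f := f.toLinearMap) hker hw
    rw [← LinearMap.range_dualMap_eq_dualAnnihilator_ker] at hf
    obtain ⟨g, hg⟩ := hf
    refine ⟨g ∘ₗ L.mkQ, ?_, fun i ↦ ?_⟩
    · rw [Submodule.mem_dualAnnihilator]
      intro x hx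
      rw [LinearMap.comp_apply, Submodule.mkQ_apply, (Submodule.Quotient.mk_eq_zero L).2 hx,
        map_zero]
    · have hgi : g (φ (Pi.single i 1)) = -f (Pi.single i 1) := LinearMap.congr_fun hg _
      have hfi : f (Pi.single i 1) < 0 :=
        (hsimplex _ (single_mem_stdSimplex ℝ i)).trans (hrs.trans hs)
      have hφi : φ (Pi.single i 1) = L.mkQ (b i) := by simp [φ]
      rw [LinearMap.comp_apply, ← hφi, hgi]
      exact neg_pos.2 hfi
  · right
    obtain ⟨w, hw, hwker⟩ := Set.not_disjoint_iff.1 hdisj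
    exact ⟨w, hw, (Submodule.Quotient.mk_eq_zero L).1 hwker⟩

theorem exists_mem_dualAnnihilator_pos_or_exists_sum_mem {ι : Type*} (s : Finset ι)
    (b : ι → E) (L : Submodule ℝ E) :
    (∃ y ∈ L.dualAnnihilator, ∀ i ∈ s, 0 < y (b i)) ∨
      ∃ w : ι → ℝ, (∀ i ∈ s, 0 ≤ w i) ∧ (∃ i ∈ s, 0 < w i) ∧ ∑ i ∈ s, w i • b i ∈ L := by
  classical
  rcases exists_mem_dualAnnihilator_pos_or_exists_mem_stdSimplex (fun i : s ↦ b i) L with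
    ⟨y, hyL, hy⟩ | ⟨w, ⟨hw, hw_sum⟩, hwL⟩
  · exact .inl ⟨y, hyL, fun i hi ↦ hy ⟨i, hi⟩⟩
  · have hpos : ∃ i, 0 < w i := by
      by_contra! hle
      linarith [Finset.sum_nonpos fun i (_ : i ∈ Finset.univ) ↦ hle i]
    obtain ⟨i, hi⟩ := hpos
    refine .inr ⟨fun i ↦ if h : i ∈ s then w ⟨i, h⟩ else 0, fun i hi ↦ ?_, ⟨i, i.2, ?_⟩, ?_⟩
    · simpa [hi] using hw ⟨i, hi⟩
    · simpa using hi
    · rw [← Finset.sum_coe_sort]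
      simpa using hwL

end Separation

section Perturbation

variable {c δ : ℝ}

theorem eventually_pos_add_mul (hc : 0 ≤ c) (hδ : c = 0 → 0 < δ) :
    ∀ᶠ τ in 𝓝[>] (0 : ℝ), 0 < c + τ * δ := by
  rcases hc.eq_or_lt with rfl | hc
  · filter_upwards [self_mem_nhdsWithin] with τ hτ
    simpa using mul_pos hτ (hδ rfl)
  · have hlim : Filter.Tendsto (fun τ ↦ c + τ * δ) (𝓝[>] 0) (𝓝 c) := by
      have hcont : Continuous fun τ ↦ c + τ * δ := by fun_prop
      simpa using (hcont.tendsto 0).mono_left nhdsWithin_le_nhds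
    exact hlim.eventually_const_lt hc

theorem eventually_add_mul_mem_Ioo (hc : c ∈ Set.Icc 0 1) (h0 : c = 0 → 0 < δ)
    (h1 : c = 1 → δ < 0) : ∀ᶠ τ in 𝓝[>] (0 : ℝ), c + τ * δ ∈ Set.Ioo 0 1 := by
  have h1' : 1 - c = 0 → 0 < -δ := fun h ↦ neg_pos.2 (h1 (sub_eq_zero.1 h).symm)
  filter_upwards [eventually_pos_add_mul hc.1 h0,
    eventually_pos_add_mul (sub_nonneg.2 hc.2) h1'] with τ hpos hlt
  exact ⟨hpos, by linarith⟩

theorem eventually_add_mul_mem_Icc (hc : c ∈ Set.Icc 0 1) (h0 : c = 0 → 0 ≤ δ)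
    (h1 : c = 1 → δ ≤ 0) : ∀ᶠ τ in 𝓝[>] (0 : ℝ), c + τ * δ ∈ Set.Icc 0 1 := by
  by_cases hδ : δ = 0
  · simpa only [hδ, mul_zero, add_zero] using Filter.Eventually.of_forall fun _ ↦ hc
  · exact (eventually_add_mul_mem_Ioo hc (fun h ↦ (h0 h).lt_of_ne' hδ)
      fun h ↦ (h1 h).lt_of_ne hδ).mono fun τ h ↦ Set.Ioo_subset_Icc_self h

end Perturbation

section FaceValue

variable {ι : Type*} [DecidableEq ι] {T U : Finset ι} {c g : ι → ℝ} {i : ι}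

theorem sum_ite_mem_one_zero_smul {M : Type*} [AddCommGroup M] [Module ℝ M] (hT : T ⊆ U)
    (f : ι → M) : ∑ i ∈ U, (if i ∈ T then (1 : ℝ) else 0) • f i = ∑ i ∈ T, f i := by
  simp only [ite_smul, one_smul, zero_smul, Finset.sum_ite_mem, Finset.inter_eq_right.2 hT]

theorem mul_le_ite_of_pos_of_neg (hpos : ∀ i ∈ T, 0 < g i) (hneg : ∀ i ∈ U \ T, g i < 0)
    (hc : ∀ i ∈ U, c i ∈ Set.Icc 0 1) (hi : i ∈ U) :
    c i * g i ≤ (if i ∈ T then 1 else 0) * g i := by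
  obtain ⟨h0, h1⟩ := hc i hi
  split_ifs with hiT
  · exact mul_le_mul_of_nonneg_right h1 (hpos i hiT).le
  · exact mul_le_mul_of_nonpos_right h0 (hneg i (Finset.mem_sdiff.2 ⟨hi, hiT⟩)).le

theorem sum_mul_le_sum_of_pos_of_neg (hT : T ⊆ U) (hpos : ∀ i ∈ T, 0 < g i)
    (hneg : ∀ i ∈ U \ T, g i < 0) (hc : ∀ i ∈ U, c i ∈ Set.Icc 0 1) :
    ∑ i ∈ U, c i * g i ≤ ∑ i ∈ T, g i :=
  calc ∑ i ∈ U, c i * g i ≤ ∑ i ∈ U, (if i ∈ T then 1 else 0) * g i :=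
        Finset.sum_le_sum fun _ hi ↦ mul_le_ite_of_pos_of_neg hpos hneg hc hi
    _ = ∑ i ∈ T, g i := sum_ite_mem_one_zero_smul hT g

theorem eq_ite_of_sum_le_sum_mul (hT : T ⊆ U) (hpos : ∀ i ∈ T, 0 < g i)
    (hneg : ∀ i ∈ U \ T, g i < 0) (hc : ∀ i ∈ U, c i ∈ Set.Icc 0 1)
    (hle : ∑ i ∈ T, g i ≤ ∑ i ∈ U, c i * g i) (hi : i ∈ U) :
    c i = if i ∈ T then 1 else 0 := by
  have hterm (i : ι) (hi : i ∈ U) := mul_le_ite_of_pos_of_neg hpos hneg hc hi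
  have heq := (Finset.sum_eq_sum_iff_of_le hterm).1
    ((Finset.sum_le_sum hterm).antisymm ((sum_ite_mem_one_zero_smul hT g).trans_le hle)) i hi
  have hgi : g i ≠ 0 := by
    by_cases hiT : i ∈ T
    · exact (hpos i hiT).ne'
    · exact (hneg i (Finset.mem_sdiff.2 ⟨hi, hiT⟩)).ne
  exact mul_right_cancel₀ hgi heq

theorem eq_ite_mem_filter (hc : c i ∈ Set.Icc 0 1) (hIoo : c i ∉ Set.Ioo 0 1) (hi : i ∈ U) :
    c i = if i ∈ ({j ∈ U | c j = 1} : Finset ι) then 1 else 0 := by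
  grind

end FaceValue

section EdgeCoord

variable {ι : Type*} [DecidableEq ι] {i j : ι}

/-- The coefficients of the generators of a zonotope at the point with parameter `r` of an edge
parallel to the generator `i`, where `T` is the set of other generators with coefficient `1`. -/
def edgeCoord (i : ι) (T : Finset ι) (r : ℝ) : ι → ℝ :=
  Function.update (fun j ↦ if j ∈ T then 1 else 0) i r

theorem edgeCoord_self (i : ι) (T : Finset ι) (r : ℝ) : edgeCoord i T r i = r :=
  Function.update_self ..

theorem edgeCoord_of_ne (hji : j ≠ i) (T : Finset ι) (r : ℝ) :
    edgeCoord i T r j = if j ∈ T then 1 else 0 :=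
  Function.update_of_ne hji ..

theorem edgeCoord_mem_Icc {r : ℝ} (hr : r ∈ Set.Icc 0 1) (i : ι) (T : Finset ι) (j : ι) :
    edgeCoord i T r j ∈ Set.Icc 0 1 := by
  rcases eq_or_ne j i with rfl | hji
  · rwa [edgeCoord_self]
  · rw [edgeCoord_of_ne hji]
    split_ifs <;> simp

end EdgeCoord

section Zonotopes

variable {E : Type*} [AddCommGroup E] [Module ℝ E]

/-- The zonotope with generators `V`, translated by `x`. -/
def zonotope (x : E) (V : Finset E) : Set E := {x} + ∑ v ∈ V, segment ℝ 0 v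

variable {x p q : E} {V T : Finset E} {v w : E} {c δ : E → ℝ} {y z : Module.Dual ℝ E} {t : ℝ}

theorem mem_zonotope :
    p ∈ zonotope x V ↔ ∃ c : E → ℝ, (∀ v ∈ V, c v ∈ Set.Icc 0 1) ∧ x + ∑ v ∈ V, c v • v = p := by
  have hseg (v u : E) : u ∈ segment ℝ 0 v ↔ ∃ r ∈ Set.Icc (0 : ℝ) 1, r • v = u := by
    simp [segment_eq_image]
  rw [zonotope, Set.singleton_add, Set.mem_image]
  constructor
  · rintro ⟨u, hu, rfl⟩
    obtain ⟨g, hg, rfl⟩ := (Set.mem_finsetSum ..).1 hu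
    choose! c hc using fun v (hv : v ∈ V) ↦ (hseg v (g v)).1 (hg hv)
    exact ⟨c, fun v hv ↦ (hc v hv).1, by rw [Finset.sum_congr rfl fun v hv ↦ (hc v hv).2]⟩
  · rintro ⟨c, hc, rfl⟩
    exact ⟨_, (Set.mem_finsetSum ..).2
      ⟨fun v ↦ c v • v, fun hv ↦ (hseg _ _).2 ⟨_, hc _ hv, rfl⟩, rfl⟩, rfl⟩

section HyperplaneSections

theorem add_sum_add_mul_smul (τ : ℝ) :
    x + ∑ v ∈ V, (c v + τ * δ v) • v = x + ∑ v ∈ V, c v • v + τ • ∑ v ∈ V, δ v • v := by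
  simp only [add_smul, mul_smul, Finset.sum_add_distrib, ← Finset.smul_sum, add_assoc]

theorem eventually_add_smul_mem_zonotope (hc : ∀ v ∈ V, c v ∈ Set.Icc 0 1)
    (hδ : ∀ v ∈ V, δ v ≠ 0 → c v ∈ Set.Ioo 0 1) :
    ∀ᶠ τ in 𝓝[>] (0 : ℝ), x + ∑ v ∈ V, c v • v + τ • ∑ v ∈ V, δ v • v ∈ zonotope x V := by
  have hev : ∀ᶠ τ in 𝓝[>] (0 : ℝ), ∀ v ∈ V, c v + τ * δ v ∈ Set.Icc 0 1 := by
    refine (Filter.eventually_all_finset V).2 fun v hv ↦ eventually_add_mul_mem_Icc (hc v hv) ?_ ?_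
    all_goals
      by_cases hδv : δ v = 0
      · simp [hδv]
      · grind
  filter_upwards [hev] with τ hτ
  exact mem_zonotope.2 ⟨_, hτ, add_sum_add_mul_smul τ⟩

theorem sum_smul_eq_zero_of_mem_extremePoints
    (hp : x + ∑ v ∈ V, c v • v ∈ (zonotope x V ∩ {q | z q = t}).extremePoints ℝ)
    (hc : ∀ v ∈ V, c v ∈ Set.Icc 0 1) (hδ : ∀ v ∈ V, δ v ≠ 0 → c v ∈ Set.Ioo 0 1)
    (hz : z (∑ v ∈ V, δ v • v) = 0) : ∑ v ∈ V, δ v • v = 0 := by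
  set p := x + ∑ v ∈ V, c v • v
  set d := ∑ v ∈ V, δ v • v with hd
  have hadd : ∀ᶠ τ in 𝓝[>] (0 : ℝ), p + τ • d ∈ zonotope x V :=
    eventually_add_smul_mem_zonotope hc hδ
  have hsub : ∀ᶠ τ in 𝓝[>] (0 : ℝ), p - τ • d ∈ zonotope x V := by
    filter_upwards [eventually_add_smul_mem_zonotope (x := x) (δ := -δ) hc (by simpa using hδ)]
      with τ hτ
    simpa [← hd, ← sub_eq_add_neg] using hτ
  obtain ⟨τ, ⟨hadd, hsub⟩, hτ : 0 < τ⟩ := ((hadd.and hsub).and self_mem_nhdsWithin).exists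
  have hzp : z p = t := hp.1.2
  have hmid : p ∈ openSegment ℝ (p + τ • d) (p - τ • d) :=
    ⟨1 / 2, 1 / 2, by norm_num, by norm_num, by norm_num, by module⟩
  have heq : p + τ • d = p := hp.2 ⟨hadd, by simp [hzp, hz]⟩ ⟨hsub, by simp [hzp, hz]⟩ hmid
  exact (smul_eq_zero.1 (add_eq_left.1 heq)).resolve_left hτ.ne'

theorem subsingleton_coords_mem_Ioo_of_mem_extremePoints
    (hV : (V : Set E).Pairwise fun u v ↦ LinearIndependent ℝ ![u, v])
    (hp : x + ∑ v ∈ V, c v • v ∈ (zonotope x V ∩ {q | z q = t}).extremePoints ℝ)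
    (hc : ∀ v ∈ V, c v ∈ Set.Icc 0 1) : {v | v ∈ V ∧ c v ∈ Set.Ioo 0 1}.Subsingleton := by
  classical
  rintro v ⟨hvV, hcv⟩ w ⟨hwV, hcw⟩
  by_contra hvw
  have hli := LinearIndependent.pair_iff.1 (hV hvV hwV hvw)
  have hcomb (α β : ℝ) (h : z (α • v + β • w) = 0) : α = 0 ∧ β = 0 := by
    let δ : E → ℝ := Pi.single v α + Pi.single w β
    have hsum : ∑ u ∈ V, δ u • u = α • v + β • w := by
      simp [δ, add_smul, Finset.sum_add_distrib, Pi.single_apply, ite_smul, hvV, hwV]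
    refine hli α β (hsum ▸ sum_smul_eq_zero_of_mem_extremePoints hp hc (fun u _ hu ↦ ?_) (hsum ▸ h))
    by_cases huv : u = v
    · exact huv ▸ hcv
    · by_cases huw : u = w
      · exact huw ▸ hcw
      · simp [δ, huv, huw] at hu
  have hzv : z v = 0 := by
    have := hcomb (z w) (-z v) (by simp [mul_comm])
    exact neg_eq_zero.1 this.2
  exact one_ne_zero (hcomb 1 0 (by simp [hzv])).1

/-- A linear relation `∑ δ u • u = 0` pointing into the cube at `c` moves the coordinates of the
point without moving the point; a nonzero entry besides the one at `v` would thus produce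
a second coordinate strictly between `0` and `1`. -/
theorem eq_zero_of_sum_smul_eq_zero_of_mem_extremePoints
    (hV : (V : Set E).Pairwise fun u v ↦ LinearIndependent ℝ ![u, v])
    (hp : x + ∑ v ∈ V, c v • v ∈ (zonotope x V ∩ {q | z q = t}).extremePoints ℝ)
    (hc : ∀ v ∈ V, c v ∈ Set.Icc 0 1) (hv : v ∈ V) (hcv : c v ∈ Set.Ioo 0 1)
    (hsum : ∑ u ∈ V, δ u • u = 0) (h0 : ∀ u ∈ V, c u = 0 → 0 ≤ δ u)
    (h1 : ∀ u ∈ V, c u = 1 → δ u ≤ 0) (hw : w ∈ V) (hwv : w ≠ v) : δ w = 0 := by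
  by_contra hδw
  have hIcc : ∀ᶠ τ in 𝓝[>] (0 : ℝ), ∀ u ∈ V, c u + τ * δ u ∈ Set.Icc 0 1 :=
    (Filter.eventually_all_finset V).2 fun u hu ↦
      eventually_add_mul_mem_Icc (hc u hu) (h0 u hu) (h1 u hu)
  have hIoo_v : ∀ᶠ τ in 𝓝[>] (0 : ℝ), c v + τ * δ v ∈ Set.Ioo 0 1 :=
    eventually_add_mul_mem_Ioo (hc v hv) (fun h ↦ absurd h hcv.1.ne') fun h ↦ absurd h hcv.2.ne
  have hIoo_w : ∀ᶠ τ in 𝓝[>] (0 : ℝ), c w + τ * δ w ∈ Set.Ioo 0 1 :=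
    eventually_add_mul_mem_Ioo (hc w hw) (fun h ↦ (h0 w hw h).lt_of_ne' hδw)
      fun h ↦ (h1 w hw h).lt_of_ne hδw
  obtain ⟨τ, hτ, hτv, hτw⟩ := (hIcc.and (hIoo_v.and hIoo_w)).exists
  have hmove := add_sum_add_mul_smul (x := x) (V := V) (c := c) (δ := δ) τ
  rw [hsum, smul_zero, add_zero] at hmove
  exact hwv (subsingleton_coords_mem_Ioo_of_mem_extremePoints hV (hmove ▸ hp) hτ
    ⟨hw, hτw⟩ ⟨hv, hτv⟩)

/-- The edges of a zonotope parallel to its generator `v`, given by their sign patterns: the edge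
`[x + ∑ w ∈ T, w, x + ∑ w ∈ T, w + v]` is encoded as `T`. The maximum of `y` over the zonotope is
attained along this edge exactly when `y` vanishes at `v` and has sign pattern `T` on the other
generators. -/
def edgePatterns [DecidableEq E] (V : Finset E) (v : E) : Finset (Finset E) :=
  signPatterns (Module.Dual.eval ℝ E) (LinearMap.ker (Module.Dual.eval ℝ E v)) (V.erase v)

theorem mem_edgePatterns [DecidableEq E] : T ∈ edgePatterns V v ↔ T ⊆ V.erase v ∧
    ∃ y : Module.Dual ℝ E, y v = 0 ∧ (∀ w ∈ T, 0 < y w) ∧ ∀ w ∈ V.erase v \ T, y w < 0 :=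
  mem_signPatterns

theorem filter_coord_eq_one_mem_edgePatterns [DecidableEq E]
    (hV : (V : Set E).Pairwise fun u v ↦ LinearIndependent ℝ ![u, v])
    (hp : x + ∑ v ∈ V, c v • v ∈ (zonotope x V ∩ {q | z q = t}).extremePoints ℝ)
    (hc : ∀ v ∈ V, c v ∈ Set.Icc 0 1) (hv : v ∈ V) (hcv : c v ∈ Set.Ioo 0 1) :
    {w ∈ V.erase v | c w = 1} ∈ edgePatterns V v := by
  let ε : E → ℝ := fun w ↦ if c w = 1 then 1 else -1
  rcases exists_mem_dualAnnihilator_pos_or_exists_sum_mem (V.erase v) (fun w ↦ ε w • w)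
    (Submodule.span ℝ {v}) with ⟨y, hyv, hy⟩ | ⟨l, hl, ⟨w, hw, hlw⟩, hlv⟩
  · refine mem_edgePatterns.2 ⟨Finset.filter_subset .., y, ?_, fun w hw ↦ ?_, fun w hw ↦ ?_⟩
    · exact (Submodule.mem_dualAnnihilator y).1 hyv v (Submodule.mem_span_singleton_self v)
    · obtain ⟨hw, hcw⟩ := Finset.mem_filter.1 hw
      simpa [ε, hcw] using hy w hw
    · rw [← Finset.filter_not, Finset.mem_filter] at hw
      simpa [ε, hw.2] using hy w hw.1
  · obtain ⟨μ, hμ⟩ := Submodule.mem_span_singleton.1 hlv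
    let δ : E → ℝ := Function.update (fun u ↦ -(l u * ε u)) v μ
    have hδ (u : E) (hu : u ∈ V.erase v) : δ u = -(l u * ε u) :=
      Function.update_of_ne (Finset.ne_of_mem_erase hu) ..
    have hsum : ∑ u ∈ V, δ u • u = 0 := by
      rw [← Finset.add_sum_erase V _ hv, Finset.sum_congr rfl fun u hu ↦ by rw [hδ u hu]]
      simp only [δ, Function.update_self, hμ, neg_smul, mul_smul, Finset.sum_neg_distrib,
        add_neg_cancel]
    have h0 (u : E) (hu : u ∈ V) (hcu : c u = 0) : 0 ≤ δ u := by
      have hu : u ∈ V.erase v := Finset.mem_erase.2 ⟨fun h ↦ (h ▸ hcv.1).ne' hcu, hu⟩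
      simpa [hδ u hu, ε, hcu] using hl u hu
    have h1 (u : E) (hu : u ∈ V) (hcu : c u = 1) : δ u ≤ 0 := by
      have hu : u ∈ V.erase v := Finset.mem_erase.2 ⟨fun h ↦ (h ▸ hcv.2).ne hcu, hu⟩
      simpa [hδ u hu, ε, hcu] using hl u hu
    have hδw := eq_zero_of_sum_smul_eq_zero_of_mem_extremePoints hV hp hc hv hcv hsum h0 h1
      (Finset.mem_of_mem_erase hw) (Finset.ne_of_mem_erase hw)
    have hε : ε w ≠ 0 := by simp only [ε]; split_ifs <;> norm_num
    exact absurd hδw (by simp [hδ w hw, hlw.ne', hε])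

end HyperplaneSections

section SegmentSections

theorem injOn_segment_add (hzv : z v ≠ 0) : Set.InjOn z (segment ℝ p (p + v)) := by
  rw [segment_eq_image']
  rintro _ ⟨r, -, rfl⟩ _ ⟨s, -, rfl⟩ h
  have hrs : r = s := by simpa [hzv] using h
  rw [hrs]

theorem apply_ne_zero_of_mem_openSegment_add (hpt : z p ≠ t) (hq : q ∈ openSegment ℝ p (p + v))
    (hqt : z q = t) : z v ≠ 0 := by
  intro hzv
  rw [openSegment_eq_image'] at hq
  obtain ⟨r, -, rfl⟩ := hq
  exact hpt (by simpa [hzv] using hqt)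

theorem subsingleton_openSegment_inter (hpt : z p ≠ t) :
    (openSegment ℝ p (p + v) ∩ {q | z q = t}).Subsingleton := by
  rintro q ⟨hq, hqt⟩ r ⟨hr, hrt⟩
  have hzv := apply_ne_zero_of_mem_openSegment_add hpt hq hqt
  exact injOn_segment_add hzv (openSegment_subset_segment _ _ _ hq)
    (openSegment_subset_segment _ _ _ hr) (hqt.trans hrt.symm)

theorem nonempty_openSegment_inter_iff (hpt : z p ≠ t) :
    (openSegment ℝ p (p + v) ∩ {q | z q = t}).Nonempty ↔ t ∈ Set.uIoo (z p) (z p + z v) := by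
  have himage : z '' openSegment ℝ p (p + v) = openSegment ℝ (z p) (z p + z v) := by
    rw [← map_add]
    exact image_openSegment ℝ z.toAffineMap p (p + v)
  have hmem : (openSegment ℝ p (p + v) ∩ {q | z q = t}).Nonempty ↔
      t ∈ openSegment ℝ (z p) (z p + z v) := by rw [← himage]; rfl
  rw [hmem]
  by_cases hzv : z v = 0
  · simp [hzv, hpt.symm]
  · rw [openSegment_eq_Ioo' (by simpa using hzv)]
    rfl

theorem ncard_openSegment_inter (hpt : z p ≠ t) :
    ((openSegment ℝ p (p + v) ∩ {q | z q = t}).ncard : ℝ) =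
      (Set.uIoo (z p) (z p + z v)).indicator 1 t := by
  rcases Set.eq_empty_or_nonempty (openSegment ℝ p (p + v) ∩ {q | z q = t}) with hempty | hne
  · have ht := (nonempty_openSegment_inter_iff hpt).not.1 (Set.not_nonempty_iff_eq_empty.2 hempty)
    rw [hempty, Set.ncard_empty, Set.indicator_of_notMem ht, Nat.cast_zero]
  · have ht := (nonempty_openSegment_inter_iff hpt).1 hne
    have hncard := Set.ncard_eq_one.2
      (Set.exists_eq_singleton_iff_nonempty_subsingleton.2
        ⟨hne, subsingleton_openSegment_inter hpt⟩)
    rw [hncard, Set.indicator_of_mem ht, Nat.cast_one, Pi.one_apply]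

end SegmentSections

section Edges

variable [DecidableEq E] {e : (_ : E) × Finset E}

/-- All edges of a zonotope with generators `V`, as pairs of a generator and a sign pattern in the
encoding of `edgePatterns`. -/
def zonotopeEdges (V : Finset E) : Finset ((_ : E) × Finset E) := V.sigma (edgePatterns V)

/-- The edge encoded by `e`, without its endpoints. -/
def openEdge (x : E) (e : (_ : E) × Finset E) : Set E :=
  openSegment ℝ (x + ∑ w ∈ e.2, w) (x + ∑ w ∈ e.2, w + e.1)

theorem mem_zonotopeEdges : ⟨v, T⟩ ∈ zonotopeEdges V ↔ v ∈ V ∧ T ∈ edgePatterns V v :=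
  Finset.mem_sigma

theorem sum_smul_eq_sum_add_smul (hv : v ∈ V) (hT : T ⊆ V.erase v)
    (hc : ∀ w ∈ V.erase v, c w = if w ∈ T then 1 else 0) :
    ∑ w ∈ V, c w • w = ∑ w ∈ T, w + c v • v := by
  rw [← Finset.sum_erase_add V _ hv, ← sum_ite_mem_one_zero_smul hT fun w ↦ w]
  exact congrArg (· + c v • v) (Finset.sum_congr rfl fun w hw ↦ by rw [hc w hw])

theorem sum_edgeCoord_smul (hv : v ∈ V) (hT : T ⊆ V.erase v) (r : ℝ) :
    ∑ w ∈ V, edgeCoord v T r w • w = ∑ w ∈ T, w + r • v := by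
  rw [sum_smul_eq_sum_add_smul hv hT fun w hw ↦ edgeCoord_of_ne (Finset.ne_of_mem_erase hw) ..,
    edgeCoord_self]

theorem segment_subset_zonotope (hv : v ∈ V) (hT : T ⊆ V.erase v) :
    segment ℝ (x + ∑ w ∈ T, w) (x + ∑ w ∈ T, w + v) ⊆ zonotope x V := by
  rw [segment_eq_image']
  rintro _ ⟨r, hr, rfl⟩
  exact mem_zonotope.2 ⟨_, fun w _ ↦ edgeCoord_mem_Icc hr v T w,
    by simp only [sum_edgeCoord_smul hv hT, add_sub_cancel_left, ← add_assoc]⟩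

theorem apply_add_sum_smul_of_apply_eq_zero (hyv : y v = 0) :
    y (x + ∑ w ∈ V, c w • w) = y x + ∑ w ∈ V.erase v, c w * y w := by
  simp only [map_add, map_sum, map_smul, smul_eq_mul]
  rw [Finset.sum_erase _ (by rw [hyv, mul_zero])]

theorem apply_le_of_mem_zonotope (hT : T ⊆ V.erase v) (hyv : y v = 0) (hpos : ∀ w ∈ T, 0 < y w)
    (hneg : ∀ w ∈ V.erase v \ T, y w < 0) (hq : q ∈ zonotope x V) :
    y q ≤ y (x + ∑ w ∈ T, w) := by
  obtain ⟨c, hc, rfl⟩ := mem_zonotope.1 hq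
  rw [apply_add_sum_smul_of_apply_eq_zero hyv, map_add, map_sum, add_le_add_iff_left]
  exact sum_mul_le_sum_of_pos_of_neg hT hpos hneg fun w hw ↦ hc w (Finset.mem_of_mem_erase hw)

theorem coord_eq_ite_of_apply_le (hT : T ⊆ V.erase v) (hyv : y v = 0) (hpos : ∀ w ∈ T, 0 < y w)
    (hneg : ∀ w ∈ V.erase v \ T, y w < 0) (hc : ∀ w ∈ V, c w ∈ Set.Icc 0 1)
    (hle : y (x + ∑ w ∈ T, w) ≤ y (x + ∑ w ∈ V, c w • w)) (hw : w ∈ V.erase v) :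
    c w = if w ∈ T then 1 else 0 := by
  rw [apply_add_sum_smul_of_apply_eq_zero hyv, map_add, map_sum, add_le_add_iff_left] at hle
  exact eq_ite_of_sum_le_sum_mul hT hpos hneg
    (fun w hw ↦ hc w (Finset.mem_of_mem_erase hw)) hle hw

theorem isExtreme_segment_of_mem_edgePatterns (hv : v ∈ V) (hT : T ∈ edgePatterns V v) :
    IsExtreme ℝ (zonotope x V) (segment ℝ (x + ∑ w ∈ T, w) (x + ∑ w ∈ T, w + v)) := by
  obtain ⟨hTV, y, hyv, hpos, hneg⟩ := mem_edgePatterns.1 hT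
  refine ⟨segment_subset_zonotope hv hTV, fun p hp q hq r hr hpqr ↦ ?_⟩
  have hle {q : E} (hq : q ∈ zonotope x V) := apply_le_of_mem_zonotope hTV hyv hpos hneg hq
  have hyr : y r = y (x + ∑ w ∈ T, w) := by
    rw [segment_eq_image'] at hr
    obtain ⟨s, -, rfl⟩ := hr
    simp [hyv]
  have hyp : y (x + ∑ w ∈ T, w) ≤ y p := by
    obtain ⟨α, β, hα, hβ, hαβ, rfl⟩ := hpqr
    rw [map_add, map_smul, map_smul, smul_eq_mul, smul_eq_mul] at hyr
    by_contra! hlt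
    have hαp := mul_lt_mul_of_pos_left hlt hα
    have hβq := mul_le_mul_of_nonneg_left (hle hq) hβ.le
    refine (add_lt_add_of_lt_of_le hαp hβq).ne ?_
    rw [hyr, ← add_mul, hαβ, one_mul]
  obtain ⟨c, hc, rfl⟩ := mem_zonotope.1 hp
  rw [sum_smul_eq_sum_add_smul hv hTV fun w hw ↦
    coord_eq_ite_of_apply_le hTV hyv hpos hneg hc hyp hw, segment_eq_image']
  exact ⟨c v, hc v hv, by simp only [add_sub_cancel_left, ← add_assoc]⟩

theorem pairwiseDisjoint_openEdge (x : E) :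
    (zonotopeEdges V : Set ((_ : E) × Finset E)).PairwiseDisjoint (openEdge x) := by
  rintro ⟨v, T⟩ he ⟨v', T'⟩ he' hne
  obtain ⟨hv, hT⟩ := mem_zonotopeEdges.1 he
  obtain ⟨hv', hT'⟩ := mem_zonotopeEdges.1 he'
  obtain ⟨hTV, y, hyv, hpos, hneg⟩ := mem_edgePatterns.1 hT
  have hTV' := (mem_edgePatterns.1 hT').1
  refine Set.disjoint_left.2 fun p hp hp' ↦ hne ?_
  rw [openEdge, openSegment_eq_image'] at hp hp'
  obtain ⟨r, -, rfl⟩ := hp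
  obtain ⟨r', hr', heq⟩ := hp'
  simp only [add_sub_cancel_left] at heq
  have hle : y (x + ∑ w ∈ T, w) ≤ y (x + ∑ w ∈ V, edgeCoord v' T' r' w • w) := by
    rw [sum_edgeCoord_smul hv' hTV', ← add_assoc, heq]
    simp [hyv]
  have hcoord (w : E) (hw : w ∈ V.erase v) : edgeCoord v' T' r' w = if w ∈ T then 1 else 0 :=
    coord_eq_ite_of_apply_le hTV hyv hpos hneg
      (fun w _ ↦ edgeCoord_mem_Icc (Set.Ioo_subset_Icc_self hr') v' T' w) hle hw
  obtain rfl : v' = v := by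
    by_contra hvv'
    have hcv' := hcoord v' (Finset.mem_erase.2 ⟨hvv', hv'⟩)
    rw [edgeCoord_self] at hcv'
    split_ifs at hcv'
    exacts [hr'.2.ne hcv', hr'.1.ne' hcv']
  have hTT' : T = T' := by
    ext w
    by_cases hw : w ∈ V.erase v'
    · have hcw := hcoord w hw
      rw [edgeCoord_of_ne (Finset.ne_of_mem_erase hw)] at hcw
      grind
    · exact iff_of_false (fun h ↦ hw (hTV h)) fun h ↦ hw (hTV' h)
  rw [hTT']

theorem subset_extremePoints_section (he : e ∈ zonotopeEdges V)
    (ht : ∀ S ⊆ V, z (x + ∑ w ∈ S, w) ≠ t) :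
    openEdge x e ∩ {p | z p = t} ⊆ (zonotope x V ∩ {p | z p = t}).extremePoints ℝ := by
  obtain ⟨v, T⟩ := e
  obtain ⟨hv, hT⟩ := mem_zonotopeEdges.1 he
  have hTV := (mem_edgePatterns.1 hT).1
  rintro p ⟨hpe, hpt⟩
  have hzv := apply_ne_zero_of_mem_openSegment_add
    (ht T (hTV.trans (Finset.erase_subset v V))) hpe hpt
  have hp := openSegment_subset_segment _ _ _ hpe
  refine mem_extremePoints_iff_left.2 ⟨⟨segment_subset_zonotope hv hTV hp, hpt⟩, ?_⟩
  rintro q ⟨hq, hqt⟩ r ⟨hr, -⟩ hpqr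
  have hqe :=
    (isExtreme_segment_of_mem_edgePatterns hv hT).left_mem_of_mem_openSegment hq hr hp hpqr
  exact injOn_segment_add hzv hqe hp (hqt.trans hpt.symm)

theorem extremePoints_section_subset
    (hV : (V : Set E).Pairwise fun u v ↦ LinearIndependent ℝ ![u, v])
    (ht : ∀ S ⊆ V, z (x + ∑ w ∈ S, w) ≠ t) :
    (zonotope x V ∩ {p | z p = t}).extremePoints ℝ ⊆
      ⋃ e ∈ zonotopeEdges V, openEdge x e ∩ {p | z p = t} := by
  intro p hp
  have hpt : z p = t := hp.1.2
  obtain ⟨c, hc, rfl⟩ := mem_zonotope.1 hp.1.1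
  have hsub := subsingleton_coords_mem_Ioo_of_mem_extremePoints hV hp hc
  obtain ⟨v, hv, hcv⟩ : ∃ v ∈ V, c v ∈ Set.Ioo 0 1 := by
    by_contra! hfrac
    refine ht {w ∈ V | c w = 1} (Finset.filter_subset ..) ?_
    rw [← hpt, ← sum_ite_mem_one_zero_smul (Finset.filter_subset _ V) fun w ↦ w]
    exact congrArg (fun u ↦ z (x + u)) (Finset.sum_congr rfl fun w hw ↦ by
      rw [← eq_ite_mem_filter (hc w hw) (hfrac w hw) hw])
  have hT := filter_coord_eq_one_mem_edgePatterns hV hp hc hv hcv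
  have hcoord (w : E) (hw : w ∈ V.erase v) :=
    eq_ite_mem_filter (hc w (Finset.mem_of_mem_erase hw)) (fun hcw ↦ Finset.ne_of_mem_erase hw
      (hsub ⟨Finset.mem_of_mem_erase hw, hcw⟩ ⟨hv, hcv⟩)) hw
  refine Set.mem_biUnion (x := ⟨v, {w ∈ V.erase v | c w = 1}⟩)
    (mem_zonotopeEdges.2 ⟨hv, hT⟩) ⟨?_, hpt⟩
  rw [sum_smul_eq_sum_add_smul hv (Finset.filter_subset ..) hcoord, openEdge,
    openSegment_eq_image']
  exact ⟨c v, hcv, by simp only [add_sub_cancel_left, ← add_assoc]⟩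

theorem extremePoints_section_eq_biUnion
    (hV : (V : Set E).Pairwise fun u v ↦ LinearIndependent ℝ ![u, v])
    (ht : ∀ S ⊆ V, z (x + ∑ w ∈ S, w) ≠ t) :
    (zonotope x V ∩ {p | z p = t}).extremePoints ℝ =
      ⋃ e ∈ zonotopeEdges V, openEdge x e ∩ {p | z p = t} :=
  (extremePoints_section_subset hV ht).antisymm <|
    Set.iUnion₂_subset fun _ he ↦ subset_extremePoints_section he ht

end Edges

section Width

theorem add_sum_mem_zonotope (hT : T ⊆ V) : x + ∑ w ∈ T, w ∈ zonotope x V := by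
  classical
  refine mem_zonotope.2 ⟨fun w ↦ if w ∈ T then 1 else 0, fun w _ ↦ ?_, ?_⟩
  · dsimp only
    split_ifs <;> simp
  · rw [sum_ite_mem_one_zero_smul hT]

theorem isGreatest_image_zonotope (x : E) (V : Finset E) (z : Module.Dual ℝ E) :
    IsGreatest (z '' zonotope x V) (z x + ∑ v ∈ V, (z v)⁺) := by
  constructor
  · refine ⟨_, add_sum_mem_zonotope (Finset.filter_subset (0 ≤ z ·) V), ?_⟩
    rw [map_add, map_sum, Finset.sum_filter]
    simp only [posPart_eq_ite]
  · rintro _ ⟨_, hp, rfl⟩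
    obtain ⟨c, hc, rfl⟩ := mem_zonotope.1 hp
    simp only [map_add, map_sum, map_smul, smul_eq_mul]
    gcongr with v hv
    exact (mul_le_mul_of_nonneg_left (le_posPart _) (hc v hv).1).trans
      (mul_le_of_le_one_left (posPart_nonneg _) (hc v hv).2)

theorem isLeast_image_zonotope (x : E) (V : Finset E) (z : Module.Dual ℝ E) :
    IsLeast (z '' zonotope x V) (z x - ∑ v ∈ V, (z v)⁻) := by
  obtain ⟨⟨p, hp, hpz⟩, hub⟩ := isGreatest_image_zonotope x V (-z)
  simp only [LinearMap.neg_apply, posPart_neg] at hpz hub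
  refine ⟨⟨p, hp, by linarith⟩, ?_⟩
  rintro _ ⟨q, hq, rfl⟩
  have hqz : -z q ≤ -z x + ∑ v ∈ V, (z v)⁻ := hub ⟨q, hq, rfl⟩
  linarith

end Width

section AverageCount

theorem integral_indicator_uIoo_s18 {a b r s : ℝ} (hr : r ∈ Set.Icc a b) (hs : s ∈ Set.Icc a b) :
    ∫ t in a..b, (Set.uIoo r s).indicator (1 : ℝ → ℝ) t = |s - r| := by
  have hmeas : MeasurableSet (Set.uIoo r s) := measurableSet_Ioo
  have hsub : Set.uIoo r s ⊆ Set.Ioc a b := fun t ht ↦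
    ⟨(le_inf hr.1 hs.1).trans_lt ht.1, (ht.2.trans_le (sup_le hr.2 hs.2)).le⟩
  rw [intervalIntegral.integral_of_le (hr.1.trans hr.2),
    MeasureTheory.integral_indicator_one hmeas, MeasureTheory.measureReal_def,
    MeasureTheory.Measure.restrict_apply hmeas, Set.inter_eq_left.2 hsub,
    Real.volume_uIoo, ENNReal.toReal_ofReal (abs_nonneg _)]

theorem intervalIntegrable_indicator_uIoo_s18 (a b r s : ℝ) :
    IntervalIntegrable ((Set.uIoo r s).indicator (1 : ℝ → ℝ)) MeasureTheory.volume a b :=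
  MeasureTheory.Integrable.intervalIntegrable <|
    (MeasureTheory.integrable_indicator_iff measurableSet_Ioo).2 <|
      MeasureTheory.integrableOn_const (Real.volume_uIoo.trans_ne ENNReal.ofReal_ne_top)

theorem ae_forall_apply_add_sum_ne (x : E) (V : Finset E) (z : Module.Dual ℝ E) :
    ∀ᵐ t : ℝ, ∀ S ⊆ V, z (x + ∑ w ∈ S, w) ≠ t := by
  have hfinite := V.powerset.finite_toSet.image fun S ↦ z (x + ∑ w ∈ S, w)
  filter_upwards [MeasureTheory.measure_eq_zero_iff_ae_notMem.1 (hfinite.measure_zero _)]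
    with t ht S hS hSt
  exact ht ⟨S, Finset.mem_powerset.2 hS, hSt⟩

variable [DecidableEq E]

theorem ncard_extremePoints_section
    (hV : (V : Set E).Pairwise fun u v ↦ LinearIndependent ℝ ![u, v])
    (ht : ∀ S ⊆ V, z (x + ∑ w ∈ S, w) ≠ t) :
    (((zonotope x V ∩ {p | z p = t}).extremePoints ℝ).ncard : ℝ) =
      ∑ e ∈ zonotopeEdges V, (Set.uIoo (z (x + ∑ w ∈ e.2, w))
        (z (x + ∑ w ∈ e.2, w) + z e.1)).indicator 1 t := by
  have hne (e) (he : e ∈ zonotopeEdges V) : z (x + ∑ w ∈ e.2, w) ≠ t :=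
    ht e.2 ((mem_edgePatterns.1 (mem_zonotopeEdges.1 he).2).1.trans (Finset.erase_subset ..))
  rw [extremePoints_section_eq_biUnion hV ht, ← Finset.set_biUnion_coe,
    (zonotopeEdges V).finite_toSet.ncard_biUnion (s := (openEdge x · ∩ {p | z p = t}))
      (fun e he ↦ (subsingleton_openSegment_inter (hne e he)).finite)
      ((pairwiseDisjoint_openEdge x).mono fun e ↦ Set.inter_subset_left),
    finsum_mem_coe_finset, Nat.cast_sum]
  exact Finset.sum_congr rfl fun e he ↦ ncard_openSegment_inter (hne e he)

theorem integral_ncard_extremePoints_section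
    (hV : (V : Set E).Pairwise fun u v ↦ LinearIndependent ℝ ![u, v]) {a b : ℝ}
    (ha : a ∈ lowerBounds (z '' zonotope x V)) (hb : b ∈ upperBounds (z '' zonotope x V)) :
    ∫ t in a..b, (((zonotope x V ∩ {p | z p = t}).extremePoints ℝ).ncard : ℝ) =
      ∑ v ∈ V, (edgePatterns V v).card * |z v| := by
  have hIcc {p : E} (hp : p ∈ zonotope x V) : z p ∈ Set.Icc a b :=
    ⟨ha ⟨p, hp, rfl⟩, hb ⟨p, hp, rfl⟩⟩
  have hedge (e) (he : e ∈ zonotopeEdges V) :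
      ∫ t in a..b, (Set.uIoo (z (x + ∑ w ∈ e.2, w))
        (z (x + ∑ w ∈ e.2, w) + z e.1)).indicator (1 : ℝ → ℝ) t = |z e.1| := by
    obtain ⟨hv, hT⟩ := mem_zonotopeEdges.1 he
    have hsub := segment_subset_zonotope (x := x) hv (mem_edgePatterns.1 hT).1
    rw [← map_add, integral_indicator_uIoo_s18 (hIcc (hsub (left_mem_segment ..)))
      (hIcc (hsub (right_mem_segment ..))), map_add, add_sub_cancel_left]
  calc
    _ = ∫ t in a..b, ∑ e ∈ zonotopeEdges V, (Set.uIoo (z (x + ∑ w ∈ e.2, w))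
          (z (x + ∑ w ∈ e.2, w) + z e.1)).indicator (1 : ℝ → ℝ) t :=
      intervalIntegral.integral_congr_ae <| (ae_forall_apply_add_sum_ne x V z).mono
        fun t ht _ ↦ ncard_extremePoints_section hV ht
    _ = ∑ e ∈ zonotopeEdges V, |z e.1| := by
      rw [intervalIntegral.integral_finsetSum fun e _ ↦ intervalIntegrable_indicator_uIoo_s18 ..]
      exact Finset.sum_congr rfl hedge
    _ = ∑ v ∈ V, (edgePatterns V v).card * |z v| := by
      simp only [zonotopeEdges, Finset.sum_sigma, Finset.sum_const, nsmul_eq_mul]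

end AverageCount

end Zonotopes

theorem avgVert_zonotope {d : ℕ} (x : Fin d → ℝ) {V : Finset (Fin d → ℝ)}
    (hV : (V : Set (Fin d → ℝ)).Pairwise fun u v ↦ LinearIndependent ℝ ![u, v])
    (z : Fin d → ℝ) :
    avgVert (zonotope x V) z =
      (∑ v ∈ V, (edgePatterns V v).card * |dotp z v|) / ∑ v ∈ V, |dotp z v| := by
  set φ := dotProductEquiv ℝ (Fin d) z
  have hdotp : dotp z = φ := rfl
  have hmin := isLeast_image_zonotope x V φ
  have hmax := isGreatest_image_zonotope x V φ
  have htMin : tMin (zonotope x V) z = φ x - ∑ v ∈ V, (φ v)⁻ := hdotp ▸ hmin.csInf_eq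
  have htMax : tMax (zonotope x V) z = φ x + ∑ v ∈ V, (φ v)⁺ := hdotp ▸ hmax.csSup_eq
  have hwidth : tMax (zonotope x V) z - tMin (zonotope x V) z = ∑ v ∈ V, |φ v| := by
    simp only [htMin, htMax, ← posPart_add_negPart, Finset.sum_add_distrib]
    ring
  rw [avgVert, hwidth, htMin, htMax, inv_mul_eq_div]
  simp only [nVert, hdotp, integral_ncard_extremePoints_section hV hmin.2 hmax.2]

section SpanPair

variable {K E : Type*} [Field K] [AddCommGroup E] [Module K E] {v w : E} {S : Submodule K E}

theorem span_pair_eq_of_finrank_eq_two (hS : Module.finrank K S = 2)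
    (hli : LinearIndependent K ![v, w]) (hv : v ∈ S) (hw : w ∈ S) :
    Submodule.span K {v, w} = S := by
  have : FiniteDimensional K S := Module.finite_of_finrank_eq_succ hS
  refine Submodule.eq_of_le_of_finrank_eq
    (Submodule.span_le.2 (Set.insert_subset hv (Set.singleton_subset_iff.2 hw))) ?_
  rw [← Matrix.range_cons_cons_empty v w ![], finrank_span_eq_card hli, Fintype.card_fin, hS]

theorem dualAnnihilator_span_pair (v w : E) :
    (Submodule.span K {v, w}).dualAnnihilator =
      LinearMap.ker (Module.Dual.eval K E v) ⊓ LinearMap.ker (Module.Dual.eval K E w) := by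
  ext y
  rw [← SetLike.mem_coe, Submodule.coe_dualAnnihilator_span, Set.mem_ofPred_eq,
    Set.insert_subset_iff, Set.singleton_subset_iff]
  rfl

theorem not_ker_eval_le (hli : LinearIndependent K ![v, w]) :
    ¬LinearMap.ker (Module.Dual.eval K E v) ≤ LinearMap.ker (Module.Dual.eval K E w) := by
  intro hle
  have hw : w ∈ Submodule.span K {v} :=
    (Subspace.forall_mem_dualAnnihilator_apply_eq_zero_iff _ w).1 fun y hy ↦
      hle ((Submodule.mem_dualAnnihilator y).1 hy v (Submodule.mem_span_singleton_self v))
  obtain ⟨r, hr⟩ := Submodule.mem_span_singleton.1 hw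
  exact (LinearIndependent.pair_iff' (hli.ne_zero 0)).1 hli r hr

theorem finrank_ker_eval_add_one [FiniteDimensional K E] (hv : v ≠ 0) :
    Module.finrank K (LinearMap.ker (Module.Dual.eval K E v)) + 1 = Module.finrank K E := by
  rw [Module.Dual.finrank_ker_add_one_of_ne_zero ((Module.eval_apply_eq_zero_iff K v).not.2 hv),
    Subspace.dual_finrank_eq]

end SpanPair

theorem card_edgePatterns_of_finrank_eq_three {E : Type*} [AddCommGroup E] [Module ℝ E]
    [DecidableEq E] [DecidableEq (Submodule ℝ E)] {V : Finset E} {v : E}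
    (hE : Module.finrank ℝ E = 3)
    (hV : (V : Set E).Pairwise fun u v ↦ LinearIndependent ℝ ![u, v]) (hv : v ∈ V)
    (hne : (V.erase v).Nonempty) :
    (edgePatterns V v).card = 2 * ((V.erase v).image fun w ↦ Submodule.span ℝ {v, w}).card := by
  have : FiniteDimensional ℝ E := Module.finite_of_finrank_eq_succ hE
  have hli (w : E) (hw : w ∈ V.erase v) : LinearIndependent ℝ ![v, w] :=
    hV hv (Finset.mem_of_mem_erase hw) (Finset.ne_of_mem_erase hw).symm
  have hv0 : v ≠ 0 := hne.elim fun w hw ↦ (hli w hw).ne_zero 0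
  have hker := finrank_ker_eval_add_one (K := ℝ) hv0
  rw [hE, Nat.succ_inj] at hker
  rw [edgePatterns, card_signPatterns_of_finrank_eq_two hker hne
    fun w hw ↦ not_ker_eval_le (hli w hw)]
  simp_rw [← dualAnnihilator_span_pair]
  rw [← Finset.card_image_of_injective (f := Submodule.dualAnnihilator)
    ((V.erase v).image fun w ↦ Submodule.span ℝ {v, w})
    fun _ _ ↦ Subspace.dualAnnihilator_inj.1, Finset.image_image]
  rfl

theorem sum_abs_dotp_ne_zero {d : ℕ} {V : Finset (Fin d → ℝ)}
    (hspan : Submodule.span ℝ (V : Set (Fin d → ℝ)) = ⊤) {z : Fin d → ℝ} (hz : z ≠ 0) :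
    ∑ v ∈ V, |dotp z v| ≠ 0 := by
  intro hsum
  have hzero := (Finset.sum_eq_zero_iff_of_nonneg fun v _ ↦ abs_nonneg (dotp z v)).1 hsum
  refine hz ((dotProductEquiv ℝ (Fin d)).map_eq_zero_iff.1 (LinearMap.ext_on hspan fun v hv ↦ ?_))
  exact abs_eq_zero.1 (hzero v hv)

section Hypergraph

variable {V W G : Finset (Fin 3 → ℝ)} {v w : Fin 3 → ℝ}

theorem isHEdge_iff : IsHEdge V W ↔ W ⊆ V ∧
    Module.finrank ℝ (Submodule.span ℝ (W : Set (Fin 3 → ℝ))) = 2 ∧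
      ∀ v ∈ V, v ∈ Submodule.span ℝ (W : Set (Fin 3 → ℝ)) → v ∈ W := by
  refine and_congr_right fun _ ↦ and_congr_right fun hrank ↦ forall₂_congr fun v _ ↦ ?_
  by_cases hvW : v ∈ Submodule.span ℝ (W : Set (Fin 3 → ℝ))
  · rw [Submodule.span_insert_eq_span hvW, hrank]
    simp [hvW]
  · have hinsert := Submodule.finrank_sup_span_singleton hvW
    rw [sup_comm, ← Submodule.span_insert, hrank] at hinsert
    simp [hinsert, hvW]

theorem mem_iff_mem_span_of_isHEdge (hW : IsHEdge V W) (hv : v ∈ V) :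
    v ∈ W ↔ v ∈ Submodule.span ℝ (W : Set (Fin 3 → ℝ)) :=
  ⟨fun h ↦ Submodule.subset_span h, (isHEdge_iff.1 hW).2.2 v hv⟩

theorem injOn_span_isHEdge (V : Finset (Fin 3 → ℝ)) :
    Set.InjOn (fun W : Finset (Fin 3 → ℝ) ↦ Submodule.span ℝ (W : Set (Fin 3 → ℝ)))
      {W | IsHEdge V W} := by
  intro W hW W' hW' hspan
  have hsub {W W' : Finset (Fin 3 → ℝ)} (hW : IsHEdge V W) (hW' : IsHEdge V W')
      (hspan : Submodule.span ℝ (W : Set (Fin 3 → ℝ)) = Submodule.span ℝ W') : W ⊆ W' :=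
    fun v hv ↦ (mem_iff_mem_span_of_isHEdge hW' (hW.1 hv)).2 (hspan ▸ Submodule.subset_span hv)
  exact (hsub hW hW' hspan).antisymm (hsub hW' hW hspan.symm)

theorem exists_mem_ne_of_isHEdge (hW : IsHEdge V W) (v : Fin 3 → ℝ) : ∃ w ∈ W, w ≠ v :=
  Finset.exists_mem_ne (hW.2.1.symm.trans_le (finrank_span_finset_le_card W)) v

theorem span_eq_top_of_isHEdge_of_ssubset (hW : IsHEdge V W) (hWV : W ⊂ V) :
    Submodule.span ℝ (V : Set (Fin 3 → ℝ)) = ⊤ := by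
  obtain ⟨v, hv, hvW⟩ := Finset.exists_of_ssubset hWV
  have htop := Submodule.eq_top_of_finrank_eq
    ((hW.2.2 v hv hvW).trans (Module.finrank_fin_fun ℝ).symm)
  exact top_unique (htop.ge.trans (Submodule.span_mono
    (Set.insert_subset hv (Finset.coe_subset.2 hW.1))))

theorem span_pair_eq_of_isHEdge
    (hV : (V : Set (Fin 3 → ℝ)).Pairwise fun u v ↦ LinearIndependent ℝ ![u, v])
    (hW : IsHEdge V W) (hv : v ∈ W) (hw : w ∈ W) (hwv : w ≠ v) :
    Submodule.span ℝ {v, w} = Submodule.span ℝ (W : Set (Fin 3 → ℝ)) :=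
  span_pair_eq_of_finrank_eq_two hW.2.1 (hV (hW.1 hv) (hW.1 hw) hwv.symm)
    (Submodule.subset_span hv) (Submodule.subset_span hw)

theorem exists_isHEdge_span_eq_span_pair (hv : v ∈ V) (hw : w ∈ V)
    (hli : LinearIndependent ℝ ![v, w]) :
    ∃ W, IsHEdge V W ∧ v ∈ W ∧
      Submodule.span ℝ (W : Set (Fin 3 → ℝ)) = Submodule.span ℝ {v, w} := by
  classical
  have hvW : v ∈ V.filter (· ∈ Submodule.span ℝ {v, w}) :=
    Finset.mem_filter.2 ⟨hv, Submodule.subset_span (Set.mem_insert ..)⟩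
  have hwW : w ∈ V.filter (· ∈ Submodule.span ℝ {v, w}) :=
    Finset.mem_filter.2 ⟨hw, Submodule.subset_span (Set.mem_insert_of_mem _ rfl)⟩
  have hspan : Submodule.span ℝ (V.filter (· ∈ Submodule.span ℝ {v, w}) : Set (Fin 3 → ℝ)) =
      Submodule.span ℝ {v, w} :=
    (Submodule.span_le.2 fun u hu ↦ (Finset.mem_filter.1 hu).2).antisymm
      (Submodule.span_mono (Set.insert_subset hvW (Set.singleton_subset_iff.2 hwW)))
  refine ⟨_, isHEdge_iff.2 ⟨Finset.filter_subset .., ?_, fun u hu huW ↦ ?_⟩, hvW, hspan⟩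
  · rw [hspan, ← Matrix.range_cons_cons_empty v w ![], finrank_span_eq_card hli, Fintype.card_fin]
  · exact Finset.mem_filter.2 ⟨hu, hspan ▸ huW⟩

theorem degF_eq_card_image_span [DecidableEq (Submodule ℝ (Fin 3 → ℝ))]
    (hV : (V : Set (Fin 3 → ℝ)).Pairwise fun u v ↦ LinearIndependent ℝ ![u, v]) (hv : v ∈ V) :
    degF V v = ((V.erase v).image fun w ↦ Submodule.span ℝ {v, w}).card := by
  rw [degF, ← ((injOn_span_isHEdge V).mono fun W hW ↦ hW.1).ncard_image, ← Set.ncard_coe_finset]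
  congr 1
  ext S
  rw [Finset.mem_coe, Finset.mem_image]
  constructor
  · rintro ⟨W, ⟨hW, hvW⟩, rfl⟩
    obtain ⟨w, hw, hwv⟩ := exists_mem_ne_of_isHEdge hW v
    exact ⟨w, Finset.mem_erase.2 ⟨hwv, hW.1 hw⟩, span_pair_eq_of_isHEdge hV hW hvW hw hwv⟩
  · rintro ⟨w, hw, rfl⟩
    obtain ⟨hwv, hw⟩ := Finset.mem_erase.1 hw
    obtain ⟨W, hW, hvW, hspan⟩ := exists_isHEdge_span_eq_span_pair hv hw (hV hv hw hwv.symm)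
    exact ⟨W, ⟨hW, hvW⟩, hspan⟩

theorem degF_eq_one_add_card_sdiff
    (hV : (V : Set (Fin 3 → ℝ)).Pairwise fun u v ↦ LinearIndependent ℝ ![u, v])
    (hG : IsHEdge V G) (hv : v ∈ G)
    (hgen : ∀ w ∈ V \ G, ∀ u ∈ V, u ∈ Submodule.span ℝ {v, w} → u = v ∨ u = w) :
    degF V v = 1 + (V \ G).card := by
  classical
  have hmem (w : Fin 3 → ℝ) : w ∈ Submodule.span ℝ {v, w} :=
    Submodule.subset_span (Set.mem_insert_of_mem _ rfl)
  have himage : (G.erase v).image (fun w ↦ Submodule.span ℝ {v, w}) =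
      {Submodule.span ℝ (G : Set (Fin 3 → ℝ))} := by
    obtain ⟨u, hu, huv⟩ := exists_mem_ne_of_isHEdge hG v
    refine Finset.eq_singleton_iff_nonempty_unique_mem.2
      ⟨⟨_, Finset.mem_image_of_mem _ (Finset.mem_erase.2 ⟨huv, hu⟩)⟩,
        Finset.forall_mem_image.2 fun w hw ↦ ?_⟩
    obtain ⟨hwv, hw⟩ := Finset.mem_erase.1 hw
    exact span_pair_eq_of_isHEdge hV hG hv hw hwv
  have hinj : Set.InjOn (fun w ↦ Submodule.span ℝ {v, w}) (V \ G : Finset (Fin 3 → ℝ)) := by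
    intro w hw w' hw' (hspan : Submodule.span ℝ {v, w} = Submodule.span ℝ {v, w'})
    obtain ⟨hwV, hwG⟩ := Finset.mem_sdiff.1 hw
    exact (hgen w' hw' w hwV (hspan ▸ hmem w)).resolve_left fun h ↦ hwG (h ▸ hv)
  have hnotMem : Submodule.span ℝ (G : Set (Fin 3 → ℝ)) ∉
      (V \ G).image fun w ↦ Submodule.span ℝ {v, w} := by
    rw [Finset.mem_image]
    rintro ⟨w, hw, hspan⟩
    obtain ⟨hwV, hwG⟩ := Finset.mem_sdiff.1 hw
    exact hwG ((mem_iff_mem_span_of_isHEdge hG hwV).2 (hspan ▸ hmem w))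
  have herase : V.erase v = G.erase v ∪ (V \ G) := by
    have hGV := hG.1
    grind
  rw [degF_eq_card_image_span hV (hG.1 hv), herase, Finset.image_union, himage,
    Finset.singleton_union, Finset.card_insert_of_notMem hnotMem, Finset.card_image_of_injOn hinj,
    add_comm]

theorem card_edgePatterns_eq_two_mul_degF
    (hV : (V : Set (Fin 3 → ℝ)).Pairwise fun u v ↦ LinearIndependent ℝ ![u, v])
    (hspan : Submodule.span ℝ (V : Set (Fin 3 → ℝ)) = ⊤) (hv : v ∈ V) :
    (edgePatterns V v).card = 2 * degF V v := by
  classical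
  have hcard : 3 ≤ V.card := by
    have hle := finrank_span_finset_le_card (R := ℝ) V
    rwa [Set.finrank, hspan, finrank_top, Module.finrank_fin_fun] at hle
  obtain ⟨w, hw, hwv⟩ := Finset.exists_mem_ne (Nat.lt_of_succ_lt hcard) v
  rw [card_edgePatterns_of_finrank_eq_three (Module.finrank_fin_fun ℝ) hV hv
    ⟨w, Finset.mem_erase.2 ⟨hwv, hw⟩⟩, degF_eq_card_image_span hV hv]

theorem avgVert_zonotope_of_degF_eq
    (hV : (V : Set (Fin 3 → ℝ)).Pairwise fun u v ↦ LinearIndependent ℝ ![u, v])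
    (hspan : Submodule.span ℝ (V : Set (Fin 3 → ℝ)) = ⊤) {m : ℕ} (hm : ∀ v ∈ V, degF V v = m)
    (x : Fin 3 → ℝ) {z : Fin 3 → ℝ} (hz : z ≠ 0) :
    avgVert (zonotope x V) z = 2 * m := by
  have hcard (v) (hv : v ∈ V) : ((edgePatterns V v).card : ℝ) = 2 * m := by
    rw [card_edgePatterns_eq_two_mul_degF hV hspan hv, hm v hv, Nat.cast_mul, Nat.cast_ofNat]
  rw [avgVert_zonotope x hV, Finset.sum_congr rfl fun v hv ↦ by rw [hcard v hv], ← Finset.mul_sum,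
    mul_div_cancel_right₀ _ (sum_abs_dotp_ne_zero hspan hz)]

end Hypergraph

/-- Example 6.2. Let `V ⊂ ℝ³` consist of `n = ℓk` pairwise linearly
independent nonzero vectors split into `ℓ` groups of `k` coplanar vectors each, in
otherwise general position. Then the zonotope `P` generated by `V` satisfies
`A(P,z) = 2(n - k + 1)` for every nonzero `z`, and `deg v = 1 + (ℓ-1)k` for every
`v ∈ V` in the hypergraph `ℱ`. -/
theorem example_groups_avgVert (k ℓ : ℕ) (hk : 2 ≤ k) (hℓ : 2 ≤ ℓ)
    (V : Finset (Fin 3 → ℝ)) (Vg : Fin ℓ → Finset (Fin 3 → ℝ))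
    (hne : ∀ v ∈ V, v ≠ 0)
    (hpair : ∀ u ∈ V, ∀ v ∈ V, u ≠ v → ∀ c : ℝ, v ≠ c • u)
    (hcardV : V.card = ℓ * k)
    (hcard : ∀ j, (Vg j).card = k)
    (hdisj : ∀ i j : Fin ℓ, i ≠ j → Disjoint (Vg i) (Vg j))
    (hunion : ∀ v, v ∈ V ↔ ∃ j, v ∈ Vg j)
    (hplane : ∀ j, Module.finrank ℝ
      (Submodule.span ℝ ((Vg j : Set (Fin 3 → ℝ)))) = 2)
    (houtside : ∀ j, ∀ v ∈ V, v ∉ Vg j →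
      v ∉ Submodule.span ℝ ((Vg j : Set (Fin 3 → ℝ))))
    (hgen : ∀ i j : Fin ℓ, i ≠ j → ∀ u ∈ Vg i, ∀ v ∈ Vg j, ∀ w ∈ V,
      (w : Fin 3 → ℝ) ∈ Submodule.span ℝ ({u, v} : Set (Fin 3 → ℝ)) →
      w = u ∨ w = v)
    (x : Fin 3 → ℝ) (P : Set (Fin 3 → ℝ))
    (hP : P = {x} + ∑ v ∈ V, segment ℝ 0 v) :
    (∀ z : Fin 3 → ℝ, z ≠ 0 → avgVert P z = 2 * ((ℓ * k : ℝ) - k + 1)) ∧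
    (∀ v ∈ V, degF V v = 1 + (ℓ - 1) * k) := by
  have hV : (V : Set (Fin 3 → ℝ)).Pairwise fun u v ↦ LinearIndependent ℝ ![u, v] :=
    fun u hu v hv huv ↦ (LinearIndependent.pair_iff' (hne u hu)).2
      fun c hc ↦ hpair u hu v hv huv c hc.symm
  have hsub (j : Fin ℓ) : Vg j ⊆ V := fun v hv ↦ (hunion v).2 ⟨j, hv⟩
  have hedge (j : Fin ℓ) : IsHEdge V (Vg j) :=
    isHEdge_iff.2 ⟨hsub j, hplane j, fun v hv ↦ not_imp_not.1 (houtside j v hv)⟩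
  have hdeg (v) (hv : v ∈ V) : degF V v = 1 + (ℓ - 1) * k := by
    obtain ⟨j, hj⟩ := (hunion v).1 hv
    rw [degF_eq_one_add_card_sdiff hV (hedge j) hj, Finset.card_sdiff_of_subset (hsub j), hcardV,
      hcard, Nat.sub_mul, one_mul]
    intro w hw u hu huvw
    obtain ⟨hwV, hwj⟩ := Finset.mem_sdiff.1 hw
    obtain ⟨i, hi⟩ := (hunion w).1 hwV
    exact hgen j i (fun hji ↦ hwj (hji ▸ hi)) v hj w hi u hu huvw
  have hssub : Vg ⟨0, by lia⟩ ⊂ V :=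
    (hsub _).ssubset_of_ne fun h ↦ by
      have := hcard ⟨0, by lia⟩
      rw [h, hcardV] at this
      nlinarith
  refine ⟨fun z hz ↦ ?_, hdeg⟩
  rw [hP]
  refine (avgVert_zonotope_of_degF_eq hV (span_eq_top_of_isHEdge_of_ssubset (hedge _) hssub)
    hdeg x hz).trans ?_
  push_cast [Nat.cast_sub (Nat.one_le_of_lt hℓ)]
  ring
end
end
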